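/- Let G be a finite directed acyclic graph whose underlying undirected graph is simple and planar. Then G has an upward planar drawing if and only if the underlying undirected graph of G has a visibility representation in which every edge is drawn as a vertical segment whose lower endpoint lies on the box of the tail of the edge and whose upper endpoint lies on the box of the head of the edge. -/

import Mathlib

open Set

/-- A point in the plane. -/
abbrev Pt : Type := ℝ × ℝ

/-- A point has integer coordinates. -/
def IsIntPt (p : Pt) : Prop := (∃ a : ℤ, p.1 = (a : ℝ)) ∧ (∃ b : ℤ, p.2 = (b : ℝ))

/-- The (closed) segments of a polygonal chain, as pairs of consecutive corners. -/
def chainSegs (l : List Pt) : List (Pt × Pt) := l.zip l.tail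

/-- The set of points covered by a polygonal chain. -/
def chainSet (l : List Pt) : Set Pt := ⋃ s ∈ chainSegs l, segment ℝ s.1 s.2

/-- A polygonal chain is simple (non-self-intersecting): it has at least two
corners, all corners are distinct, and two of its segments meet only if they are
consecutive, and then only in their shared corner. -/
def IsSimpleChain (l : List Pt) : Prop :=
  2 ≤ l.length ∧ l.Nodup ∧
    ∀ i j : ℕ, i < j → ∀ (hi : i < (chainSegs l).length) (hj : j < (chainSegs l).length),
      segment ℝ ((chainSegs l).get ⟨i, hi⟩).1 ((chainSegs l).get ⟨i, hi⟩).2 ∩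
        segment ℝ ((chainSegs l).get ⟨j, hj⟩).1 ((chainSegs l).get ⟨j, hj⟩).2 ⊆
        if j = i + 1 then {((chainSegs l).get ⟨j, hj⟩).1} else (∅ : Set Pt)

/-- Every interior corner of the chain is a genuine bend (a direction change). -/
def GenuineBends (l : List Pt) : Prop :=
  ∀ i : ℕ, ∀ h : i + 2 < l.length,
    ¬ Collinear ℝ ({l.get ⟨i, by omega⟩, l.get ⟨i + 1, by omega⟩, l.get ⟨i + 2, h⟩} : Set Pt)

/-- The chain is a y-monotone path (horizontal segments allowed). -/
def IsMonoChain (l : List Pt) : Prop :=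
  (l.map Prod.snd).Chain' (· ≤ ·) ∨ (l.map Prod.snd).Chain' (fun a b => b ≤ a)

/-- All segments of the chain are horizontal or vertical. -/
def IsOrthoChain (l : List Pt) : Prop :=
  ∀ s ∈ chainSegs l, s.1.1 = s.2.1 ∨ s.1.2 = s.2.2

/-- A poly-line drawing of a graph `G`: every vertex is a point, and every edge
`uv` is the polygonal chain through the list `bends u v` of bend points
(listed in order from `u` to `v`). -/
structure PolylineDrawing {V : Type*} (G : SimpleGraph V) where
  pos : V → Pt
  bends : V → V → List Pt
  bends_symm : ∀ u v, bends v u = (bends u v).reverse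

namespace PolylineDrawing

variable {V : Type*} {G : SimpleGraph V}

/-- The corner list of the curve of edge `uv`. -/
def chain (D : PolylineDrawing G) (u v : V) : List Pt :=
  D.pos u :: (D.bends u v ++ [D.pos v])

/-- The set of points of the curve of edge `uv`. -/
def curve (D : PolylineDrawing G) (u v : V) : Set Pt := chainSet (D.chain u v)

/-- The defining elements of the drawing: vertex points and bends. -/
def points (D : PolylineDrawing G) : Set Pt :=
  Set.range D.pos ∪ ⋃ (u) (v) (_ : G.Adj u v), {p | p ∈ D.bends u v}

/-- The drawing is planar: vertex points are pairwise distinct, every edge curve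
is a simple chain whose interior corners are genuine bends, an edge curve contains
no vertex point other than its endpoints, and two distinct edge curves intersect
only in points of common endpoints. -/
def IsPlanar (D : PolylineDrawing G) : Prop :=
  Function.Injective D.pos ∧
  (∀ u v, G.Adj u v → IsSimpleChain (D.chain u v) ∧ GenuineBends (D.chain u v)) ∧
  (∀ u v w, G.Adj u v → w ≠ u → w ≠ v → D.pos w ∉ D.curve u v) ∧
  (∀ u v x y, G.Adj u v → G.Adj x y → s(u, v) ≠ s(x, y) →
    D.curve u v ∩ D.curve x y ⊆ D.pos '' (({u, v} : Set V) ∩ ({x, y} : Set V)))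

/-- All defining elements have integer coordinates. -/
def IntCoords (D : PolylineDrawing G) : Prop := ∀ p ∈ D.points, IsIntPt p

/-- A straight-line drawing: no edge has bends. -/
def IsStraightLine (D : PolylineDrawing G) : Prop := ∀ u v : V, D.bends u v = []

/-- Every edge curve is a y-monotone path. -/
def IsYMonotone (D : PolylineDrawing G) : Prop :=
  ∀ u v, G.Adj u v → IsMonoChain (D.chain u v)

/-- The drawing fits (after translation) in the rows `1, …, h`. -/
def InHeight (D : PolylineDrawing G) (h : ℕ) : Prop :=
  ∃ y0 : ℤ, ∀ p ∈ D.points, (y0 : ℝ) ≤ p.2 ∧ p.2 ≤ (y0 : ℝ) + (h : ℝ) - 1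

/-- The drawing fits (after translation) in the columns `1, …, w`. -/
def InWidth (D : PolylineDrawing G) (w : ℕ) : Prop :=
  ∃ x0 : ℤ, ∀ p ∈ D.points, (x0 : ℝ) ≤ p.1 ∧ p.1 ≤ (x0 : ℝ) + (w : ℝ) - 1

end PolylineDrawing

/-- An axis-parallel box (possibly degenerated to a segment or a point). -/
structure Box where
  x1 : ℝ
  x2 : ℝ
  y1 : ℝ
  y2 : ℝ
  hx : x1 ≤ x2
  hy : y1 ≤ y2

/-- The set of points of a box. -/
def Box.pts (b : Box) : Set Pt := Set.Icc b.x1 b.x2 ×ˢ Set.Icc b.y1 b.y2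

/-- An orthogonal drawing of a graph `G`: every vertex is an axis-aligned box, and
every edge `uv` is an axis-parallel polygonal chain `chain u v` (its first corner is
the attachment point on the box of `u`, its last corner the attachment point on the
box of `v`). -/
structure OrthDrawing {V : Type*} (G : SimpleGraph V) where
  box : V → Box
  chain : V → V → List Pt
  chain_symm : ∀ u v, chain v u = (chain u v).reverse

namespace OrthDrawing

variable {V : Type*} {G : SimpleGraph V}

/-- The set of points of the curve of edge `uv`. -/
def curve (D : OrthDrawing G) (u v : V) : Set Pt := chainSet (D.chain u v)

/-- The defining elements of the drawing: corners of vertex boxes, and corners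
(attachment points and bends) of edge chains. -/
def points (D : OrthDrawing G) : Set Pt :=
  (⋃ v, ({((D.box v).x1, (D.box v).y1), ((D.box v).x1, (D.box v).y2),
          ((D.box v).x2, (D.box v).y1), ((D.box v).x2, (D.box v).y2)} : Set Pt)) ∪
    ⋃ (u) (v) (_ : G.Adj u v), {p | p ∈ D.chain u v}

/-- All points covered by the drawing (boxes and edge curves). -/
def region (D : OrthDrawing G) : Set Pt :=
  (⋃ v, (D.box v).pts) ∪ ⋃ (u) (v) (_ : G.Adj u v), D.curve u v

/-- The drawing is planar: vertex boxes are pairwise disjoint; every edge curve is a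
simple axis-parallel chain, with genuine bends, joining the boxes of its endpoints;
an edge curve meets a vertex box only in its attachment points; and two distinct
edge curves intersect only in common endpoints. -/
def IsPlanar (D : OrthDrawing G) : Prop :=
  (∀ u v : V, u ≠ v → Disjoint (D.box u).pts (D.box v).pts) ∧
  (∀ u v, G.Adj u v → IsSimpleChain (D.chain u v) ∧ IsOrthoChain (D.chain u v) ∧
      GenuineBends (D.chain u v)) ∧
  (∀ u v, G.Adj u v → ∃ p q l, D.chain u v = p :: (l ++ [q]) ∧
      p ∈ (D.box u).pts ∧ q ∈ (D.box v).pts) ∧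
  (∀ u v w, G.Adj u v → D.curve u v ∩ (D.box w).pts ⊆
      {p | (w = u ∧ (D.chain u v).head? = some p) ∨
           (w = v ∧ (D.chain u v).getLast? = some p)}) ∧
  (∀ u v x y, G.Adj u v → G.Adj x y → s(u, v) ≠ s(x, y) →
      D.curve u v ∩ D.curve x y ⊆
        {p | ((D.chain u v).head? = some p ∨ (D.chain u v).getLast? = some p) ∧
             ((D.chain x y).head? = some p ∨ (D.chain x y).getLast? = some p)})

/-- A flat drawing: every vertex box is degenerated to a horizontal segment. -/
def IsFlat (D : OrthDrawing G) : Prop := ∀ v, (D.box v).y1 = (D.box v).y2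

/-- A visibility representation: an orthogonal drawing without bends, i.e. every
edge is a single horizontal or vertical segment. -/
def IsVR (D : OrthDrawing G) : Prop := ∀ u v, G.Adj u v → (D.chain u v).length = 2

/-- Every edge curve is a y-monotone path. -/
def IsYMonotone (D : OrthDrawing G) : Prop := ∀ u v, G.Adj u v → IsMonoChain (D.chain u v)

/-- All defining elements have integer coordinates. -/
def IntCoords (D : OrthDrawing G) : Prop := ∀ p ∈ D.points, IsIntPt p

/-- The drawing fits (after translation) in the rows `1, …, h`. -/
def InHeight (D : OrthDrawing G) (h : ℕ) : Prop :=
  ∃ y0 : ℤ, ∀ p ∈ D.points, (y0 : ℝ) ≤ p.2 ∧ p.2 ≤ (y0 : ℝ) + (h : ℝ) - 1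

/-- The drawing fits (after translation) in the columns `1, …, w`. -/
def InWidth (D : OrthDrawing G) (w : ℕ) : Prop :=
  ∃ x0 : ℤ, ∀ p ∈ D.points, (x0 : ℝ) ≤ p.1 ∧ p.1 ≤ (x0 : ℝ) + (w : ℝ) - 1

end OrthDrawing

/-- `G` is planar: it admits a (real-coordinate) planar straight-line drawing
(by Fáry's theorem this is equivalent to planarity for finite simple graphs). -/
def HasPlanarEmbedding {V : Type*} (G : SimpleGraph V) : Prop :=
  ∃ pos : V → Pt, Function.Injective pos ∧
    (∀ u v w, G.Adj u v → w ≠ u → w ≠ v → pos w ∉ segment ℝ (pos u) (pos v)) ∧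
    ∀ u v x y, G.Adj u v → G.Adj x y → s(u, v) ≠ s(x, y) →
      segment ℝ (pos u) (pos v) ∩ segment ℝ (pos x) (pos y) ⊆
        pos '' (({u, v} : Set V) ∩ ({x, y} : Set V))

/-! ### Straightening of bar-visibility structures -/

/-- Combinatorial bar-visibility data: bars `[l v, r v]` at heights `Y v`, and vertical edges. -/
structure VData (W : Type) where
  Y : W → ℚ
  E : W → W → Prop
  k : W → W → ℝ
  l : W → ℝ
  r : W → ℝ
  hlr : ∀ v, l v ≤ r v
  hY : Function.Injective Y
  hE : ∀ a b, E a b → Y a < Y b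
  hk : ∀ a b, E a b → l a ≤ k a b ∧ k a b ≤ r a ∧ l b ≤ k a b ∧ k a b ≤ r b
  hsep : ∀ a b v, E a b → Y a < Y v → Y v < Y b → k a b < l v ∨ r v < k a b

namespace VData

variable {W : Type}

/-- Mirror image. -/
def mirror (D : VData W) : VData W where
  Y := D.Y
  E := D.E
  k := fun a b => - D.k a b
  l := fun v => - D.r v
  r := fun v => - D.l v
  hlr := fun v => neg_le_neg (D.hlr v)
  hY := D.hY
  hE := D.hE
  hk := fun a b h => by
    obtain ⟨h1, h2, h3, h4⟩ := D.hk a b h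
    exact ⟨neg_le_neg h2, neg_le_neg h1, neg_le_neg h4, neg_le_neg h3⟩
  hsep := fun a b v h h1 h2 => by
    rcases D.hsep a b v h h1 h2 with h3 | h3
    · right; exact neg_lt_neg h3
    · left; exact neg_lt_neg h3

/-- x-coordinate at height `y` of the line through the (straight-line) edge `ab`. -/
def ev (D : VData W) (x : W → ℚ) (a b : W) (y : ℚ) : ℚ :=
  x a + (x b - x a) / (D.Y b - D.Y a) * (y - D.Y a)

lemma ev_left (D : VData W) (x : W → ℚ) (a b : W) : D.ev x a b (D.Y a) = x a := by
  simp [ev]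

lemma ev_right (D : VData W) (x : W → ℚ) {a b : W} (h : D.Y a < D.Y b) :
    D.ev x a b (D.Y b) = x b := by
  have : D.Y b - D.Y a ≠ 0 := by linarith [sub_pos.2 h]
  unfold ev
  field_simp
  ring

lemma ev_affine (D : VData W) (x : W → ℚ) (a b : W) :
    ∃ p q : ℚ, ∀ y, D.ev x a b y = p + q * y := by
  refine ⟨x a - (x b - x a) / (D.Y b - D.Y a) * D.Y a, (x b - x a) / (D.Y b - D.Y a), ?_⟩
  intro y
  unfold ev
  ring

lemma ev_add_smul (D : VData W) (x z : W → ℚ) (c : ℚ) (a b : W) (y : ℚ) :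
    D.ev (fun w => x w + c * z w) a b y = D.ev x a b y + c * D.ev z a b y := by
  unfold ev; ring

lemma ev_neg (D : VData W) (x : W → ℚ) (a b : W) (y : ℚ) :
    D.ev (fun w => - x w) a b y = - D.ev x a b y := by
  unfold ev; ring

/-- `v, a, b` lie in `C`, and edge `ab` passes the height of `v`. -/
def Valid (D : VData W) (C : Finset W) (v a b : W) : Prop :=
  v ∈ C ∧ a ∈ C ∧ b ∈ C ∧ D.E a b ∧ D.Y a < D.Y v ∧ D.Y v < D.Y b

open Classical in
/-- Signed horizontal distance between `v` and edge `ab`; should be positive. -/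
noncomputable def gap (D : VData W) (x : W → ℚ) (v a b : W) : ℚ :=
  if D.r v < D.k a b then D.ev x a b (D.Y v) - x v else x v - D.ev x a b (D.Y v)

lemma gap_right (D : VData W) (x : W → ℚ) {v a b : W} (h : D.r v < D.k a b) :
    D.gap x v a b = D.ev x a b (D.Y v) - x v := by simp [gap, h]

lemma gap_left (D : VData W) (x : W → ℚ) {v a b : W} (h : D.k a b < D.l v) :
    D.gap x v a b = x v - D.ev x a b (D.Y v) := by
  have : ¬ D.r v < D.k a b := by
    have := D.hlr v
    intro h'; linarith
  simp [gap, this]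

lemma gap_add_smul (D : VData W) (x z : W → ℚ) (c : ℚ) (v a b : W) :
    D.gap (fun w => x w + c * z w) v a b = D.gap x v a b + c * D.gap z v a b := by
  unfold gap
  rw [ev_add_smul]
  split_ifs <;> ring

lemma gap_mirror (D : VData W) (x : W → ℚ) {C : Finset W} {v a b : W} (h : D.Valid C v a b) :
    D.mirror.gap (fun w => - x w) v a b = D.gap x v a b := by
  obtain ⟨-, -, -, hE, h1, h2⟩ := h
  have e : D.mirror.ev (fun w => - x w) a b (D.mirror.Y v) = - D.ev x a b (D.Y v) :=
    D.ev_neg x a b _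
  rcases D.hsep a b v hE h1 h2 with h3 | h3
  · rw [D.gap_left x h3, D.mirror.gap_right _ (neg_lt_neg h3), e]; ring
  · rw [D.gap_right x h3, D.mirror.gap_left _ (neg_lt_neg h3), e]; ring

/-- `v` is in weighted balance with its neighbours in `C`. -/
def HarmAt (D : VData W) (C : Finset W) (x : W → ℚ) (v : W) : Prop :=
  ∃ cf : W → ℚ, (∀ w, 0 ≤ cf w) ∧ (∀ w ∈ C, D.E v w ∨ D.E w v → 0 < cf w) ∧
    (∀ w, cf w ≠ 0 → D.E v w ∨ D.E w v) ∧
    ∑ w ∈ C, cf w * (D.Y w - D.Y v) = 0 ∧ ∑ w ∈ C, cf w * (x w - x v) = 0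

lemma HarmAt.mirror {D : VData W} {C : Finset W} {x : W → ℚ} {v : W} (h : D.HarmAt C x v) :
    D.mirror.HarmAt C (fun w => - x w) v := by
  obtain ⟨cf, h1, h2, h3, h4, h5⟩ := h
  refine ⟨cf, h1, h2, h3, h4, ?_⟩
  rw [← neg_eq_zero, ← Finset.sum_neg_distrib, ← h5]
  exact Finset.sum_congr rfl (fun w _ => by ring)

lemma nbr_le (D : VData W) (C : Finset W) (x : W → ℚ) (M : ℚ) (hM : 0 ≤ M)
    (hgood : ∀ v a b, D.Valid C v a b → -M ≤ D.gap x v a b) {v a b : W}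
    (hv : D.Valid C v a b) (hr : D.r v < D.k a b) (hg : D.gap x v a b = -M)
    {w : W} (hw : w ∈ C) (hadj : D.E v w ∨ D.E w v) :
    x w - D.ev x a b (D.Y w) ≤ M := by
  have hv' := hv
  obtain ⟨hvC, haC, hbC, hE, h1, h2⟩ := hv'
  rw [D.gap_right x hr] at hg
  have hab := D.hE a b hE
  have ka := D.hk a b hE
  obtain ⟨p, q, hpq⟩ := D.ev_affine x a b
  rcases hadj with hadj | hadj
  · have hvw := D.hE _ _ hadj
    have kd := D.hk _ _ hadj
    rcases lt_trichotomy (D.Y w) (D.Y b) with h | h | h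
    · have hval : D.Valid C w a b := ⟨hw, haC, hbC, hE, h1.trans hvw, h⟩
      have hrw : D.r w < D.k a b := by
        rcases D.hsep a b w hE (h1.trans hvw) h with h3 | h3
        · linarith
        · exact h3
      have := hgood w a b hval
      rw [D.gap_right x hrw] at this
      linarith
    · have := D.hY h
      subst this
      rw [D.ev_right x hab]; linarith
    · have hval : D.Valid C b v w := ⟨hbC, hvC, hw, hadj, h2, h⟩
      have hlb : D.k v w < D.l b := by
        rcases D.hsep v w b hadj h2 h with h3 | h3
        · exact h3
        · linarith
      have h4 := hgood b v w hval
      rw [D.gap_left x hlb] at h4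
      obtain ⟨p', q', hpq'⟩ := D.ev_affine x v w
      have e1 := D.ev_left x v w
      have e2 := D.ev_right x hvw
      have e3 := D.ev_right x hab
      rw [hpq] at hg e3 ⊢
      rw [hpq'] at h4 e1 e2
      have : (q' - q) * (D.Y b - D.Y v) ≤ 0 := by linarith
      have h5 : q' - q ≤ 0 := by
        by_contra hc
        push Not at hc
        nlinarith [mul_pos hc (sub_pos.2 h2)]
      nlinarith [mul_nonneg (neg_nonneg.2 h5) (sub_nonneg.2 hvw.le)]
  · have hvw := D.hE _ _ hadj
    have kd := D.hk _ _ hadj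
    rcases lt_trichotomy (D.Y a) (D.Y w) with h | h | h
    · have hval : D.Valid C w a b := ⟨hw, haC, hbC, hE, h, hvw.trans h2⟩
      have hrw : D.r w < D.k a b := by
        rcases D.hsep a b w hE h (hvw.trans h2) with h3 | h3
        · linarith
        · exact h3
      have := hgood w a b hval
      rw [D.gap_right x hrw] at this
      linarith
    · have := D.hY h
      subst this
      rw [D.ev_left x]; linarith
    · have hval : D.Valid C a w v := ⟨haC, hw, hvC, hadj, h, h1⟩
      have hlb : D.k w v < D.l a := by
        rcases D.hsep w v a hadj h h1 with h3 | h3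
        · exact h3
        · linarith
      have h4 := hgood a w v hval
      rw [D.gap_left x hlb] at h4
      obtain ⟨p', q', hpq'⟩ := D.ev_affine x w v
      have e1 := D.ev_left x w v
      have e2 := D.ev_right x hvw
      have e3 := D.ev_left x a b
      rw [hpq] at hg e3 ⊢
      rw [hpq'] at h4 e1 e2
      have : 0 ≤ (q' - q) * (D.Y v - D.Y a) := by linarith
      have h5 : 0 ≤ q' - q := by
        by_contra hc
        push Not at hc
        nlinarith [mul_pos (neg_pos.2 hc) (sub_pos.2 h1)]
      nlinarith [mul_nonneg h5 (sub_nonneg.2 hvw.le)]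

lemma nbr_eq (D : VData W) (C : Finset W) (x : W → ℚ) (M : ℚ) (hM : 0 ≤ M)
    (hgood : ∀ v a b, D.Valid C v a b → -M ≤ D.gap x v a b) {v a b : W}
    (hv : D.Valid C v a b) (hr : D.r v < D.k a b) (hg : D.gap x v a b = -M)
    (hh : D.HarmAt C x v)
    {w : W} (hw : w ∈ C) (hadj : D.E v w ∨ D.E w v) :
    x w - D.ev x a b (D.Y w) = M := by
  obtain ⟨cf, c1, c2, c3, c4, c5⟩ := hh
  obtain ⟨p, q, hpq⟩ := D.ev_affine x a b
  have hg' := hg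
  rw [D.gap_right x hr] at hg'
  have hsum : ∑ w ∈ C, cf w * (x w - D.ev x a b (D.Y w) - M) = 0 := by
    have : ∑ w ∈ C, cf w * (x w - D.ev x a b (D.Y w) - M)
        = ∑ w ∈ C, cf w * (x w - x v) - q * ∑ w ∈ C, cf w * (D.Y w - D.Y v) := by
      rw [Finset.mul_sum, ← Finset.sum_sub_distrib]
      refine Finset.sum_congr rfl (fun w _ => ?_)
      have : M = x v - D.ev x a b (D.Y v) := by linarith
      rw [this, hpq, hpq]; ring
    rw [this, c4, c5]; ring
  have hnon : ∀ w ∈ C, cf w * (x w - D.ev x a b (D.Y w) - M) ≤ 0 := by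
    intro w hw
    by_cases h0 : cf w = 0
    · rw [h0]; simp
    · have := D.nbr_le C x M hM hgood hv hr hg hw (c3 w h0)
      exact mul_nonpos_of_nonneg_of_nonpos (c1 w) (by linarith)
  have := (Finset.sum_eq_zero_iff_of_nonpos hnon).1 hsum w hw
  rcases mul_eq_zero.1 this with h | h
  · exact absurd h (c2 w hw hadj).ne'
  · linarith

lemma descend_right (D : VData W) (C : Finset W) (x : W → ℚ) (M : ℚ) (hM : 0 < M)
    (hgood : ∀ v a b, D.Valid C v a b → -M ≤ D.gap x v a b) {v a b : W}
    (hv : D.Valid C v a b) (hr : D.r v < D.k a b) (hg : D.gap x v a b = -M)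
    (hh : D.HarmAt C x v) (hin : ∃ w ∈ C, D.E w v) :
    ∃ v' a' b', D.Valid C v' a' b' ∧ D.gap x v' a' b' = -M ∧ D.Y v' < D.Y v := by
  obtain ⟨w, hw, hadj⟩ := hin
  have heq := D.nbr_eq C x M hM.le hgood hv hr hg hh hw (Or.inr hadj)
  obtain ⟨hvC, haC, hbC, hE, h1, h2⟩ := hv
  rw [D.gap_right x hr] at hg
  have hab := D.hE a b hE
  have ka := D.hk a b hE
  obtain ⟨p, q, hpq⟩ := D.ev_affine x a b
  have hvw := D.hE _ _ hadj
  have kd := D.hk _ _ hadj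
  rcases lt_trichotomy (D.Y a) (D.Y w) with h | h | h
  · have hval : D.Valid C w a b := ⟨hw, haC, hbC, hE, h, hvw.trans h2⟩
    have hrw : D.r w < D.k a b := by
      rcases D.hsep a b w hE h (hvw.trans h2) with h3 | h3
      · linarith
      · exact h3
    refine ⟨w, a, b, hval, ?_, hvw⟩
    rw [D.gap_right x hrw]
    linarith
  · have := D.hY h
    subst this
    rw [D.ev_left x] at heq; linarith
  · have hval : D.Valid C a w v := ⟨haC, hw, hvC, hadj, h, h1⟩
    have hlb : D.k w v < D.l a := by
      rcases D.hsep w v a hadj h h1 with h3 | h3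
      · exact h3
      · linarith
    refine ⟨a, w, v, hval, ?_, h1⟩
    rw [D.gap_left x hlb]
    obtain ⟨p', q', hpq'⟩ := D.ev_affine x w v
    have e1 := D.ev_left x w v
    have e2 := D.ev_right x hvw
    have e3 := D.ev_left x a b
    rw [hpq] at hg e3 heq
    rw [hpq'] at e1 e2 ⊢
    have h5 : (q' - q) * (D.Y v - D.Y w) = 0 := by linarith
    have h6 : q' - q = 0 := by
      rcases mul_eq_zero.1 h5 with h | h
      · exact h
      · linarith
    have : q' = q := by linarith
    subst this
    linarith

lemma exists_lex_min {β : Type*} (P : Finset β) (hP : P.Nonempty) (φ h : β → ℚ) :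
    ∃ m ∈ P, (∀ p ∈ P, φ m ≤ φ p) ∧ ∀ p ∈ P, φ p = φ m → h m ≤ h p := by
  classical
  obtain ⟨m, hm, hmin⟩ := P.exists_min_image φ hP
  obtain ⟨m', hm', hmin'⟩ := (P.filter (fun p => φ p = φ m)).exists_min_image h
    ⟨m, by simp [hm]⟩
  rw [Finset.mem_filter] at hm'
  refine ⟨m', hm'.1, ?_, ?_⟩
  · intro p hp; rw [hm'.2]; exact hmin p hp
  · intro p hp he
    exact hmin' p (by rw [Finset.mem_filter]; exact ⟨hp, he.trans hm'.2⟩)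

/-- The weak order is respected. -/
lemma weak [Fintype W] (D : VData W) (C : Finset W) (x : W → ℚ)
    (hH : ∀ v a b, D.Valid C v a b →
      (D.HarmAt C x v ∧ ∃ w ∈ C, D.E w v) ∨ 0 < D.gap x v a b) :
    ∀ v a b, D.Valid C v a b → 0 ≤ D.gap x v a b := by
  classical
  by_contra hcon
  push Not at hcon
  obtain ⟨v₀, a₀, b₀, hv₀, hneg⟩ := hcon
  obtain ⟨⟨v, a, b⟩, hm, hmin, hmin2⟩ := exists_lex_min
    (Finset.univ.filter (fun p : W × W × W => D.Valid C p.1 p.2.1 p.2.2))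
    ⟨(v₀, a₀, b₀), by simpa using hv₀⟩ (fun p => D.gap x p.1 p.2.1 p.2.2) (fun p => D.Y p.1)
  simp only [Finset.mem_filter, Finset.mem_univ, true_and, Prod.forall] at hm hmin hmin2
  have hMneg : D.gap x v a b < 0 := lt_of_le_of_lt (hmin _ _ _ hv₀) hneg
  have key : ∃ v' a' b', D.Valid C v' a' b' ∧ D.gap x v' a' b' = D.gap x v a b ∧
      D.Y v' < D.Y v := by
    rcases hH v a b hm with ⟨hh, hin⟩ | hpos
    · have hm' := hm
      obtain ⟨-, -, -, hE, h1, h2⟩ := hm'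
      rcases D.hsep a b v hE h1 h2 with h3 | h3
      · have := D.mirror.descend_right C (fun w => - x w) (- D.gap x v a b) (by linarith)
          (fun v' a' b' h => by
            have h' : D.Valid C v' a' b' := h
            rw [D.gap_mirror x h', neg_neg]; exact hmin _ _ _ h') (v := v) (a := a) (b := b) hm
          (neg_lt_neg h3) (by rw [D.gap_mirror x hm, neg_neg]) hh.mirror hin
        obtain ⟨v', a', b', hv', hg', hy'⟩ := this
        have h' : D.Valid C v' a' b' := hv'
        rw [D.gap_mirror x h', neg_neg] at hg'
        exact ⟨v', a', b', h', hg', hy'⟩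
      · have := D.descend_right C x (- D.gap x v a b) (by linarith)
          (fun v' a' b' h => by rw [neg_neg]; exact hmin _ _ _ h) hm h3 (by rw [neg_neg]) hh hin
        simpa using this
    · linarith
  obtain ⟨v', a', b', hv', hg', hy'⟩ := key
  exact absurd (hmin2 _ _ _ hv' hg') (not_le.2 hy')

/-- A vertex touched by an edge has all its neighbours on the line of that edge. -/
lemma touch (D : VData W) (C : Finset W) (x : W → ℚ)
    (hweak : ∀ v a b, D.Valid C v a b → 0 ≤ D.gap x v a b) {v a b : W}
    (hv : D.Valid C v a b) (hg : D.gap x v a b = 0) (hh : D.HarmAt C x v)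
    {w : W} (hw : w ∈ C) (hadj : D.E v w ∨ D.E w v) :
    x w = D.ev x a b (D.Y w) := by
  have hv' := hv
  obtain ⟨-, -, -, hE, h1, h2⟩ := hv'
  rcases D.hsep a b v hE h1 h2 with h3 | h3
  · have := D.mirror.nbr_eq C (fun w => - x w) 0 le_rfl
      (fun v' a' b' h => by
        have h' : D.Valid C v' a' b' := h
        rw [D.gap_mirror x h', neg_zero]; exact hweak _ _ _ h') (v := v) (a := a) (b := b) hv
      (neg_lt_neg h3) (by rw [D.gap_mirror x hv, neg_zero, hg]) hh.mirror hw hadj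
    have e : D.mirror.ev (fun w => - x w) a b (D.mirror.Y w) = - D.ev x a b (D.Y w) :=
      D.ev_neg x a b _
    rw [e] at this
    linarith
  · have := D.nbr_eq C x 0 le_rfl
      (fun v' a' b' h => by rw [neg_zero]; exact hweak _ _ _ h) hv h3 (by rw [hg, neg_zero]) hh
      hw hadj
    linarith

/-- Maximum principle. -/
lemma max_principle [Fintype W] (D : VData W) (C : Finset W) (B : W → Prop) (cf : W → W → ℚ)
    (hcf : ∀ v w, 0 ≤ cf v w)
    (hin : ∀ v, ¬ B v → ∃ w ∈ C, 0 < cf v w ∧ D.Y w < D.Y v)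
    (x : W → ℚ) (hx : ∀ v, ¬ B v → ∑ w ∈ C, cf v w * (x w - x v) = 0)
    (hB : ∀ v, B v → x v ≤ 0) : ∀ v, x v ≤ 0 := by
  classical
  intro v₀
  obtain ⟨v, -, hmax, hmin⟩ := exists_lex_min (Finset.univ : Finset W) ⟨v₀, Finset.mem_univ _⟩
    (fun w => - x w) D.Y
  by_contra hc
  push Not at hc
  have hv : 0 < x v := by have := hmax v₀ (Finset.mem_univ _); linarith
  have hnB : ¬ B v := fun h => by linarith [hB v h]
  obtain ⟨w, hw, hcw, hY⟩ := hin v hnB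
  have hnon : ∀ w ∈ C, cf v w * (x w - x v) ≤ 0 := fun w _ =>
    mul_nonpos_of_nonneg_of_nonpos (hcf v w) (by
      have := hmax w (Finset.mem_univ _); linarith)
  have := (Finset.sum_eq_zero_iff_of_nonpos hnon).1 (hx v hnB) w hw
  rcases mul_eq_zero.1 this with h | h
  · linarith
  · have := hmin w (Finset.mem_univ _) (by linarith)
    linarith

lemma solve [Fintype W] (D : VData W) (C : Finset W) (B : W → Prop) (cf : W → W → ℚ)
    (hcf : ∀ v w, 0 ≤ cf v w)
    (hin : ∀ v, ¬ B v → ∃ w ∈ C, 0 < cf v w ∧ D.Y w < D.Y v) (g : W → ℚ) :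
    ∃ x : W → ℚ, (∀ v, ¬ B v → ∑ w ∈ C, cf v w * (x w - x v) = 0) ∧ ∀ v, B v → x v = g v := by
  classical
  let T : (W → ℚ) →ₗ[ℚ] (W → ℚ) :=
    { toFun := fun x v => if B v then x v else ∑ w ∈ C, cf v w * (x w - x v)
      map_add' := by
        intro x y; ext v
        by_cases h : B v
        · simp [h]
        · simp only [h, if_false, Pi.add_apply]
          rw [← Finset.sum_add_distrib]
          exact Finset.sum_congr rfl (fun w _ => by ring)
      map_smul' := by
        intro c x; ext v
        by_cases h : B v
        · simp [h]
        · simp only [h, if_false, Pi.smul_apply, smul_eq_mul, RingHom.id_apply]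
          rw [Finset.mul_sum]
          exact Finset.sum_congr rfl (fun w _ => by ring) }
  have hT : ∀ x v, T x v = if B v then x v else ∑ w ∈ C, cf v w * (x w - x v) := fun _ _ => rfl
  have hinj : Function.Injective T := by
    rw [← LinearMap.ker_eq_bot, LinearMap.ker_eq_bot']
    intro x hx
    have hx' : ∀ v, (if B v then x v else ∑ w ∈ C, cf v w * (x w - x v)) = 0 := by
      intro v; rw [← hT, hx]; rfl
    have a1 : ∀ v, x v ≤ 0 := D.max_principle C B cf hcf hin x
      (fun v h => by simpa [h] using hx' v) (fun v h => by
        have := hx' v; simp only [h, if_true] at this; exact this.le)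
    have a2 : ∀ v, - x v ≤ 0 := D.max_principle C B cf hcf hin (fun v => - x v)
      (fun v h => by
        have h0 : ∑ w ∈ C, cf v w * (x w - x v) = 0 := by simpa [h] using hx' v
        rw [← neg_eq_zero, ← Finset.sum_neg_distrib, ← h0]
        exact Finset.sum_congr rfl (fun w _ => by ring)) (fun v h => by
        have := hx' v; simp only [h, if_true] at this; linarith)
    ext v
    have := a1 v; have := a2 v
    simp only [Pi.zero_apply]; linarith
  obtain ⟨x, hx⟩ := (LinearMap.injective_iff_surjective.1 hinj) (fun v => if B v then g v else 0)
  refine ⟨x, fun v h => ?_, fun v h => ?_⟩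
  · have := congrFun hx v; rw [hT] at this; simpa [h] using this
  · have := congrFun hx v; rw [hT] at this; simpa [h] using this



/-- `C` is an st-subgraph with source `s` and sink `t`. -/
def Good (D : VData W) (C : Finset W) (s t : W) : Prop :=
  s ∈ C ∧ t ∈ C ∧ D.Y s < D.Y t ∧ (∀ w ∈ C, w ≠ s → D.Y s < D.Y w ∧ ∃ z ∈ C, D.E z w) ∧
    (∀ w ∈ C, w ≠ t → D.Y w < D.Y t ∧ ∃ z ∈ C, D.E w z)

open Classical in
/-- Balanced coefficients. -/
noncomputable def cf (D : VData W) (C : Finset W) (v w : W) : ℚ :=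
  (if D.E v w then 1 / (D.Y w - D.Y v) / ((C.filter (fun z => D.E v z)).card : ℚ) else 0) +
  (if D.E w v then 1 / (D.Y v - D.Y w) / ((C.filter (fun z => D.E z v)).card : ℚ) else 0)

lemma cf_nonneg (D : VData W) (C : Finset W) (v w : W) : 0 ≤ D.cf C v w := by
  unfold cf
  apply add_nonneg
  · split_ifs with h
    · have := sub_pos.2 (D.hE _ _ h); positivity
    · exact le_rfl
  · split_ifs with h
    · have := sub_pos.2 (D.hE _ _ h); positivity
    · exact le_rfl

lemma cf_pos (D : VData W) (C : Finset W) {v w : W} (hw : w ∈ C) (h : D.E v w ∨ D.E w v) :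
    0 < D.cf C v w := by
  classical
  unfold cf
  rcases h with h | h
  · apply add_pos_of_pos_of_nonneg
    · have h1 := sub_pos.2 (D.hE _ _ h)
      have h2 : 0 < (C.filter (fun z => D.E v z)).card :=
        Finset.card_pos.2 ⟨w, by simp [hw, h]⟩
      rw [if_pos h]; positivity
    · split_ifs with h
      · have := sub_pos.2 (D.hE _ _ h); positivity
      · exact le_rfl
  · apply add_pos_of_nonneg_of_pos
    · split_ifs with h
      · have := sub_pos.2 (D.hE _ _ h); positivity
      · exact le_rfl
    · have h1 := sub_pos.2 (D.hE _ _ h)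
      have h2 : 0 < (C.filter (fun z => D.E z v)).card :=
        Finset.card_pos.2 ⟨w, by simp [hw, h]⟩
      rw [if_pos h]; positivity

lemma cf_adj (D : VData W) (C : Finset W) {v w : W} (h : D.cf C v w ≠ 0) :
    D.E v w ∨ D.E w v := by
  by_contra hc
  push Not at hc
  apply h
  simp [cf, hc.1, hc.2]

lemma cf_sum (D : VData W) (C : Finset W) {v : W} (ho : ∃ z ∈ C, D.E v z)
    (hi : ∃ z ∈ C, D.E z v) : ∑ w ∈ C, D.cf C v w * (D.Y w - D.Y v) = 0 := by
  classical
  obtain ⟨zo, zoC, hzo⟩ := ho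
  obtain ⟨zi, ziC, hzi⟩ := hi
  have h2 : 0 < (C.filter (fun z => D.E v z)).card :=
    Finset.card_pos.2 ⟨zo, by simp [zoC, hzo]⟩
  have h3 : 0 < (C.filter (fun z => D.E z v)).card :=
    Finset.card_pos.2 ⟨zi, by simp [ziC, hzi]⟩
  have h2' : ((C.filter (fun z => D.E v z)).card : ℚ) ≠ 0 := by positivity
  have h3' : ((C.filter (fun z => D.E z v)).card : ℚ) ≠ 0 := by positivity
  have key : ∀ w ∈ C, D.cf C v w * (D.Y w - D.Y v) =
      (if D.E v w then 1 / ((C.filter (fun z => D.E v z)).card : ℚ) else 0) -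
      (if D.E w v then 1 / ((C.filter (fun z => D.E z v)).card : ℚ) else 0) := by
    intro w _
    unfold cf
    rw [add_mul, sub_eq_add_neg (ite _ _ _)]
    congr 1
    · split_ifs with h
      · have h1 := (sub_pos.2 (D.hE _ _ h)).ne'
        field_simp
      · ring
    · split_ifs with h
      · have h1 := (sub_pos.2 (D.hE _ _ h)).ne'
        have : D.Y w - D.Y v = - (D.Y v - D.Y w) := by ring
        rw [this]
        field_simp
      · ring
  rw [Finset.sum_congr rfl key, Finset.sum_sub_distrib, ← Finset.sum_filter, ← Finset.sum_filter,
    Finset.sum_const, Finset.sum_const, nsmul_eq_mul, nsmul_eq_mul]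
  field_simp
  ring

/-- The starting solution, one-sided case. -/
lemma base_right [Fintype W] (D : VData W) (C : Finset W) {s t u : W} (hG : D.Good C s t)
    (huC : u ∈ C) (hus : u ≠ s) (hut : u ≠ t)
    (hright : ∀ a b, D.Valid C u a b → D.r u < D.k a b) :
    ∃ x : W → ℚ, (∀ v a b, D.Valid C v a b → 0 ≤ D.gap x v a b) ∧
      (∀ v a b, D.Valid C v a b → D.gap x v a b = 0 → D.HarmAt C x v) ∧
      ¬ ∃ p q : ℚ, ∀ w ∈ C, x w = p + q * D.Y w := by
  classical
  obtain ⟨hs, ht, hst, hin, hout⟩ := hG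
  have hsu := (hin u huC hus).1
  have hutY := (hout u huC hut).1
  set B : W → Prop := fun v => v ∉ C ∨ v = s ∨ v = t ∨ v = u with hBdef
  have hnB : ∀ v, ¬ B v → v ∈ C ∧ v ≠ s ∧ v ≠ t ∧ v ≠ u := by
    intro v hv
    simp only [hBdef] at hv
    push Not at hv
    exact hv
  have hcin : ∀ v, ¬ B v → ∃ w ∈ C, 0 < D.cf C v w ∧ D.Y w < D.Y v := by
    intro v hv
    obtain ⟨h1, h2, h3, h4⟩ := hnB v hv
    obtain ⟨z, hz, hzE⟩ := (hin v h1 h2).2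
    exact ⟨z, hz, D.cf_pos C hz (Or.inr hzE), D.hE _ _ hzE⟩
  obtain ⟨x, hx, hg⟩ := D.solve C B (D.cf C) (D.cf_nonneg C) hcin (fun w => if w = u then -1 else 0)
  have xs : x s = 0 := by rw [hg s (by simp [hBdef]), if_neg (Ne.symm hus)]
  have xt : x t = 0 := by rw [hg t (by simp [hBdef]), if_neg (Ne.symm hut)]
  have xu : x u = -1 := by rw [hg u (by simp [hBdef]), if_pos rfl]
  have hharm : ∀ v, ¬ B v → D.HarmAt C x v := by
    intro v hv
    obtain ⟨h1, h2, h3, h4⟩ := hnB v hv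
    exact ⟨D.cf C v, D.cf_nonneg C v, fun w hw h => D.cf_pos C hw h, fun w h => D.cf_adj C h,
      D.cf_sum C (hout v h1 h3).2 (hin v h1 h2).2, hx v hv⟩
  have hhull : ∀ p q : ℚ, p + q * D.Y s ≤ 0 → p + q * D.Y t ≤ 0 → p + q * D.Y u ≤ -1 →
      ∀ w ∈ C, p + q * D.Y w ≤ x w := by
    intro p q h1 h2 h3 w hw
    have := D.max_principle C B (D.cf C) (D.cf_nonneg C) hcin
      (fun w => if w ∈ C then p + q * D.Y w - x w else 0) (fun v hv => by
        obtain ⟨i1, i2, i3, i4⟩ := hnB v hv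
        have e : ∑ w ∈ C, D.cf C v w * ((if w ∈ C then p + q * D.Y w - x w else 0) -
            (if v ∈ C then p + q * D.Y v - x v else 0)) =
            q * (∑ w ∈ C, D.cf C v w * (D.Y w - D.Y v)) - ∑ w ∈ C, D.cf C v w * (x w - x v) := by
          rw [Finset.mul_sum, ← Finset.sum_sub_distrib]
          refine Finset.sum_congr rfl (fun w hw => ?_)
          rw [if_pos hw, if_pos i1]; ring
        rw [e, hx v hv, D.cf_sum C (hout v i1 i3).2 (hin v i1 i2).2]; ring) (fun v hv => by
        rcases hv with hv | hv | hv | hv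
        · simp [hv]
        · subst hv; rw [if_pos hs, xs]; linarith
        · subst hv; rw [if_pos ht, xt]; linarith
        · subst hv; rw [if_pos huC, xu]; linarith) w
    rw [if_pos hw] at this
    linarith
  have hupos : ∀ a b, D.Valid C u a b → 0 < D.gap x u a b := by
    intro a b hv
    rw [D.gap_right x (hright a b hv), xu]
    obtain ⟨-, haC, hbC, hE, h1, h2⟩ := hv
    have hab := D.hE _ _ hE
    have d1 : 0 < D.Y u - D.Y s := sub_pos.2 hsu
    have d2 : 0 < D.Y t - D.Y u := sub_pos.2 hutY
    set m := 1 / (D.Y u - D.Y s) with hm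
    set n := 1 / (D.Y t - D.Y u) with hn
    have m0 : 0 < m := by positivity
    have n0 : 0 < n := by positivity
    have m1 : m * (D.Y u - D.Y s) = 1 := by rw [hm]; field_simp
    have n1 : n * (D.Y t - D.Y u) = 1 := by rw [hn]; field_simp
    have a1 := hhull (m * D.Y s) (-m) (by linarith)
      (by nlinarith) (by linarith) a haC
    have b1 := hhull (- n * D.Y t) n (by nlinarith) (by linarith) (by linarith) b hbC
    obtain ⟨p, q, hpq⟩ := D.ev_affine x a b
    have e1 := D.ev_left x a b
    have e2 := D.ev_right x hab
    rw [hpq] at e1 e2 ⊢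
    have b2 : m * D.Y s + -m * D.Y b < p + q * D.Y b := by nlinarith
    have a2 : m * D.Y s + -m * D.Y a ≤ p + q * D.Y a := by linarith
    have : m * D.Y s + -m * D.Y u < p + q * D.Y u := by
      by_contra hc
      push Not at hc
      have hA : 0 ≤ (D.Y b - D.Y u) * (p + q * D.Y a - (m * D.Y s + -m * D.Y a)) :=
        mul_nonneg (by linarith) (by linarith)
      have hBb : 0 < (D.Y u - D.Y a) * (p + q * D.Y b - (m * D.Y s + -m * D.Y b)) :=
        mul_pos (by linarith) (by linarith)
      have hC : (D.Y b - D.Y a) * (p + q * D.Y u - (m * D.Y s + -m * D.Y u)) ≤ 0 :=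
        mul_nonpos_of_nonneg_of_nonpos (by linarith) (by linarith)
      nlinarith
    linarith
  have hval : ∀ v a b, D.Valid C v a b → v ≠ s ∧ v ≠ t := by
    intro v a b ⟨_, haC, hbC, _, h1, h2⟩
    constructor
    · rintro rfl
      by_cases h : a = v
      · subst h; exact lt_irrefl _ h1
      · exact absurd (hin a haC h).1 (not_lt.2 h1.le)
    · rintro rfl
      by_cases h : b = v
      · subst h; exact lt_irrefl _ h2
      · exact absurd (hout b hbC h).1 (not_lt.2 h2.le)
  have hkey : ∀ v a b, D.Valid C v a b → ¬ B v ∨ 0 < D.gap x v a b := by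
    intro v a b hv
    by_cases h : v = u
    · subst h; right; exact hupos a b hv
    · left
      have := hval v a b hv
      have h2 := hv.1
      simp only [hBdef]
      tauto
  refine ⟨x, D.weak C x ?_, ?_, ?_⟩
  · intro v a b hv
    rcases hkey v a b hv with h | h
    · exact Or.inl ⟨hharm v h, (hin v hv.1 (hval v a b hv).1).2⟩
    · exact Or.inr h
  · intro v a b hv h0
    rcases hkey v a b hv with h | h
    · exact hharm v h
    · linarith
  · rintro ⟨p, q, hpq⟩
    have h1 := hpq s hs
    have h2 := hpq t ht
    have h3 := hpq u huC
    rw [xs] at h1; rw [xt] at h2; rw [xu] at h3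
    have : q * (D.Y t - D.Y s) = 0 := by linarith
    rcases mul_eq_zero.1 this with h | h
    · rw [h] at h1 h3; linarith
    · linarith

/-- The starting solution. -/
lemma base [Fintype W] (D : VData W) (C : Finset W) {s t u : W} (hG : D.Good C s t)
    (huC : u ∈ C) (hus : u ≠ s) (hut : u ≠ t) :
    ∃ x : W → ℚ, (∀ v a b, D.Valid C v a b → 0 ≤ D.gap x v a b) ∧
      (∀ v a b, D.Valid C v a b → D.gap x v a b = 0 → D.HarmAt C x v) ∧
      ¬ ∃ p q : ℚ, ∀ w ∈ C, x w = p + q * D.Y w := by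
  classical
  have hne : (C.filter (fun w => w ≠ s ∧ w ≠ t)).Nonempty := ⟨u, by simp [huC, hus, hut]⟩
  obtain ⟨ul, hul, hminl⟩ := Finset.exists_min_image _ D.l hne
  obtain ⟨ur, hur, hmaxr⟩ := Finset.exists_max_image _ D.r hne
  simp only [Finset.mem_filter] at hul hur hminl hmaxr
  by_cases h1 : ∀ a b, D.Valid C ul a b → D.r ul < D.k a b
  · exact D.base_right C hG hul.1 hul.2.1 hul.2.2 h1
  by_cases h2 : ∀ a b, D.Valid C ur a b → D.k a b < D.l ur
  · obtain ⟨x, hw, hh, hn⟩ := D.mirror.base_right C (s := s) (t := t) (u := ur) hG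
      hur.1 hur.2.1 hur.2.2 (fun a b hv => neg_lt_neg (h2 a b hv))
    have hx : x = fun w => - (fun w => - x w) w := by ext w; simp
    refine ⟨fun w => - x w, ?_, ?_, ?_⟩
    · intro v a b hv
      rw [← D.gap_mirror _ hv, ← hx]; exact hw v a b hv
    · intro v a b hv h0
      rw [← D.gap_mirror _ hv, ← hx] at h0
      exact (hh v a b hv h0).mirror
    · rintro ⟨p, q, hpq⟩
      refine hn ⟨-p, -q, fun w hw => ?_⟩
      have := hpq w hw
      change x w = -p + -q * D.Y w
      linarith
  · exfalso
    push Not at h1 h2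
    obtain ⟨a, b, hv, hk⟩ := h1
    obtain ⟨a', b', hv', hk'⟩ := h2
    obtain ⟨hs, ht, hst, hin, hout⟩ := hG
    have e1 : D.k a b < D.l ul := by
      obtain ⟨-, -, -, hE, i1, i2⟩ := hv
      rcases D.hsep a b ul hE i1 i2 with h | h
      · exact h
      · linarith
    have e2 : D.r ur < D.k a' b' := by
      obtain ⟨-, -, -, hE, i1, i2⟩ := hv'
      rcases D.hsep a' b' ur hE i1 i2 with h | h
      · linarith
      · exact h
    have f1 : ∀ w ∈ C, D.l w ≤ D.k a b → w = s ∨ w = t := by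
      intro w hw hl
      by_contra hc
      push Not at hc
      have := hminl w ⟨hw, hc⟩
      linarith
    have f2 : ∀ w ∈ C, D.k a' b' ≤ D.r w → w = s ∨ w = t := by
      intro w hw hl
      by_contra hc
      push Not at hc
      have := hmaxr w ⟨hw, hc⟩
      linarith
    obtain ⟨-, haC, hbC, hE, i1, i2⟩ := hv
    obtain ⟨-, haC', hbC', hE', i1', i2'⟩ := hv'
    have k1 := D.hk a b hE
    have k2 := D.hk a' b' hE'
    have g1 := f1 a haC k1.1
    have g2 := f1 b hbC k1.2.2.1
    have g3 := f2 a' haC' k2.2.1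
    have g4 := f2 b' hbC' k2.2.2.2
    have y1 := D.hE _ _ hE
    have y2 := D.hE _ _ hE'
    have ha : a = s := by
      rcases g1 with h | h
      · exact h
      · rcases g2 with h' | h'
        · subst h; subst h'; linarith
        · subst h; subst h'; linarith
    have hb : b = t := by
      rcases g2 with h | h
      · subst ha; subst h; linarith
      · exact h
    have ha' : a' = s := by
      rcases g3 with h | h
      · exact h
      · rcases g4 with h' | h'
        · subst h; subst h'; linarith
        · subst h; subst h'; linarith
    have hb' : b' = t := by
      rcases g4 with h | h
      · subst ha'; subst h; linarith
      · exact h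
    subst ha hb ha'
    subst hb'
    have := hminl ur hur
    have := D.hlr ur
    have := D.hlr ul
    linarith


lemma ev_line (D : VData W) (x : W → ℚ) {a b : W} (h : D.Y a < D.Y b) {p q : ℚ}
    (ha : x a = p + q * D.Y a) (hb : x b = p + q * D.Y b) (y : ℚ) :
    D.ev x a b y = p + q * y := by
  have : D.Y b - D.Y a ≠ 0 := by linarith [sub_pos.2 h]
  unfold ev
  rw [ha, hb]
  field_simp
  ring

lemma gap_eq_zero (D : VData W) (x : W → ℚ) (v a b : W) :
    D.gap x v a b = 0 ↔ x v = D.ev x a b (D.Y v) := by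
  unfold gap
  split_ifs
  · constructor <;> intro h <;> linarith
  · constructor <;> intro h <;> linarith

lemma gap_affine (D : VData W) (x z : W → ℚ) {v a b : W} (h : D.Y a < D.Y b) {p q : ℚ}
    (hv : z v = x v - (p + q * D.Y v)) (ha : z a = x a - (p + q * D.Y a))
    (hb : z b = x b - (p + q * D.Y b)) : D.gap z v a b = D.gap x v a b := by
  have e : D.ev z a b (D.Y v) = D.ev x a b (D.Y v) - (p + q * D.Y v) := by
    have : D.Y b - D.Y a ≠ 0 := by linarith [sub_pos.2 h]
    unfold ev
    rw [ha, hb]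
    field_simp
    ring
  unfold gap
  rw [e, hv]
  split_ifs <;> ring

lemma exists_eps {β : Type*} (P : Finset β) (f g : β → ℚ) :
    ∃ e : ℚ, 0 < e ∧ ∀ e', 0 < e' → e' ≤ e → ∀ i ∈ P, 0 < f i → 0 < f i + e' * g i := by
  classical
  induction P using Finset.induction_on with
  | empty => exact ⟨1, one_pos, by simp⟩
  | insert i P _ ih =>
    obtain ⟨e, he, h⟩ := ih
    by_cases hf : 0 < f i
    · refine ⟨min e (f i / (|g i| + 1)), lt_min he (by positivity), ?_⟩
      intro e' h0 h1 j hj hfj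
      rcases Finset.mem_insert.1 hj with rfl | hj
      · have h2 : e' * (|g j| + 1) ≤ f j := by
          have := h1.trans (min_le_right _ _)
          rwa [le_div_iff₀ (by positivity)] at this
        have h3 : e' * (-g j) ≤ e' * |g j| :=
          mul_le_mul_of_nonneg_left (neg_le_abs _) h0.le
        nlinarith
      · exact h e' h0 (h1.trans (min_le_left _ _)) j hj hfj
    · refine ⟨e, he, ?_⟩
      intro e' h0 h1 j hj hfj
      rcases Finset.mem_insert.1 hj with rfl | hj
      · exact absurd hfj hf
      · exact h e' h0 h1 j hj hfj

/-- Resolving one tight constraint, using solutions of smaller instances. -/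
lemma resolve [Fintype W] (D : VData W) (C : Finset W) {s t : W} (hG : D.Good C s t)
    (x : W → ℚ) (hweak : ∀ v a b, D.Valid C v a b → 0 ≤ D.gap x v a b)
    (hharm : ∀ v a b, D.Valid C v a b → D.gap x v a b = 0 → D.HarmAt C x v)
    (hncol : ¬ ∃ p q : ℚ, ∀ w ∈ C, x w = p + q * D.Y w)
    (IH : ∀ (C' : Finset W) (c' c : W), C'.card < C.card → D.Good C' c' c →
      ∃ x : W → ℚ, ∀ v a b, D.Valid C' v a b → 0 < D.gap x v a b)
    {v a b : W} (hv : D.Valid C v a b) (h0 : D.gap x v a b = 0) :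
    ∃ z : W → ℚ, (∀ v a b, D.Valid C v a b → 0 ≤ D.gap z v a b) ∧ 0 < D.gap z v a b := by
  classical
  obtain ⟨hs, ht, hst, hin, hout⟩ := hG
  have hval : ∀ v a b, D.Valid C v a b → v ≠ s ∧ v ≠ t := by
    intro v a b ⟨_, haC, hbC, _, h1, h2⟩
    constructor
    · rintro rfl
      by_cases h : a = v
      · subst h; exact lt_irrefl _ h1
      · exact absurd (hin a haC h).1 (not_lt.2 h1.le)
    · rintro rfl
      by_cases h : b = v
      · subst h; exact lt_irrefl _ h2
      · exact absurd (hout b hbC h).1 (not_lt.2 h2.le)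
  obtain ⟨p, q, hpq⟩ := D.ev_affine x a b
  set On : W → Prop := fun w => x w = p + q * D.Y w with hOn
  set Bad : W → Prop := fun w => w ∈ C ∧ w ≠ s ∧ w ≠ t ∧ On w ∧
    ∀ z ∈ C, (D.E w z ∨ D.E z w) → On z with hBad
  have T1 : ∀ w a b, D.Y a < D.Y b → On a → On b → (D.gap x w a b = 0 ↔ On w) := by
    intro w a b hab ha hb
    rw [D.gap_eq_zero, D.ev_line x hab ha hb]
  have T3 : ∀ w a b, D.Valid C w a b → On a → On b → On w → Bad w := by
    intro w a b hw ha hb hwo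
    have hab := D.hE _ _ hw.2.2.2.1
    have hz := (T1 w a b hab ha hb).2 hwo
    refine ⟨hw.1, (hval w a b hw).1, (hval w a b hw).2, hwo, ?_⟩
    intro z hz' hadj
    have := D.touch C x hweak hw hz (hharm w a b hw hz) hz' hadj
    rw [D.ev_line x hab ha hb] at this
    exact this
  have hvC := hv.1
  have haC := hv.2.1
  have hbC := hv.2.2.1
  have hE := hv.2.2.2.1
  have hav := hv.2.2.2.2.1
  have hvb := hv.2.2.2.2.2
  have hab := hav.trans hvb
  have ona : On a := by
    have := D.ev_left x a b; rw [hpq] at this; exact this.symm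
  have onb : On b := by
    have := D.ev_right x hab; rw [hpq] at this; exact this.symm
  have onv : On v := (T1 v a b hab ona onb).1 h0
  have badv : Bad v := T3 v a b hv ona onb onv
  have N1 : (C.filter (fun w => On w ∧ ¬ Bad w ∧ D.Y w < D.Y v)).Nonempty := by
    obtain ⟨m, hm, hmin⟩ := (C.filter On).exists_min_image D.Y ⟨v, by simp [hvC, onv]⟩
    simp only [Finset.mem_filter] at hm hmin
    have nb : ¬ Bad m := by
      intro hb
      obtain ⟨z, hz, hzE⟩ := (hin m hm.1 hb.2.1).2
      have := hmin z ⟨hz, hb.2.2.2.2 z hz (Or.inr hzE)⟩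
      exact absurd (D.hE _ _ hzE) (not_lt.2 this)
    refine ⟨m, ?_⟩
    simp only [Finset.mem_filter]
    refine ⟨hm.1, hm.2, nb, lt_of_le_of_ne (hmin v ⟨hvC, onv⟩) ?_⟩
    intro h
    have := D.hY h
    subst this
    exact nb badv
  have N2 : (C.filter (fun w => On w ∧ ¬ Bad w ∧ D.Y v < D.Y w)).Nonempty := by
    obtain ⟨m, hm, hmin⟩ := (C.filter On).exists_max_image D.Y ⟨v, by simp [hvC, onv]⟩
    simp only [Finset.mem_filter] at hm hmin
    have nb : ¬ Bad m := by
      intro hb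
      obtain ⟨z, hz, hzE⟩ := (hout m hm.1 hb.2.2.1).2
      have := hmin z ⟨hz, hb.2.2.2.2 z hz (Or.inl hzE)⟩
      exact absurd (D.hE _ _ hzE) (not_lt.2 this)
    refine ⟨m, ?_⟩
    simp only [Finset.mem_filter]
    refine ⟨hm.1, hm.2, nb, lt_of_le_of_ne (hmin v ⟨hvC, onv⟩) ?_⟩
    intro h
    have := D.hY h
    subst this
    exact nb badv
  obtain ⟨d, hd, hdmax⟩ := Finset.exists_max_image _ D.Y N1
  obtain ⟨c, hc, hcmin⟩ := Finset.exists_min_image _ D.Y N2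
  simp only [Finset.mem_filter] at hd hdmax hc hcmin
  obtain ⟨hdC, ond, nbd, hdv⟩ := hd
  obtain ⟨hcC, onc, nbc, hvc⟩ := hc
  have hintr : ∀ w ∈ C, On w → D.Y d < D.Y w → D.Y w < D.Y c → Bad w := by
    intro w hw how h1 h2
    by_contra hnb
    rcases lt_trichotomy (D.Y w) (D.Y v) with h | h | h
    · exact absurd (hdmax w ⟨hw, how, hnb, h⟩) (not_le.2 h1)
    · have := D.hY h
      subst this
      exact hnb badv
    · exact absurd (hcmin w ⟨hw, how, hnb, h⟩) (not_le.2 h2)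
  set C' := C.filter (fun w => On w ∧ D.Y d ≤ D.Y w ∧ D.Y w ≤ D.Y c) with hC'
  have memC' : ∀ w, w ∈ C' ↔ w ∈ C ∧ On w ∧ D.Y d ≤ D.Y w ∧ D.Y w ≤ D.Y c := by
    intro w; rw [hC', Finset.mem_filter]
  have T5 : ∀ a2 b2, a2 ∈ C → b2 ∈ C → D.E a2 b2 → On a2 → On b2 → D.Y a2 < D.Y c →
      D.Y d < D.Y b2 → a2 ∈ C' ∧ b2 ∈ C' := by
    intro a2 b2 ha2 hb2 hE2 oa ob h1 h2
    have hab2 := D.hE _ _ hE2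
    have hb' : D.Y b2 ≤ D.Y c := by
      by_contra hcon
      push Not at hcon
      exact nbc (T3 c a2 b2 ⟨hcC, ha2, hb2, hE2, h1, hcon⟩ oa ob onc)
    have ha' : D.Y d ≤ D.Y a2 := by
      by_contra hcon
      push Not at hcon
      exact nbd (T3 d a2 b2 ⟨hdC, ha2, hb2, hE2, hcon, h2⟩ oa ob ond)
    rw [memC', memC']
    exact ⟨⟨ha2, oa, ha', by linarith⟩, ⟨hb2, ob, by linarith, hb'⟩⟩
  have T6 : ∀ w z, w ∈ C → z ∈ C → On w → D.Y d < D.Y w → D.Y w < D.Y c → D.E w z → z ∈ C' := by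
    intro w z hw hz ow h1 h2 hwz
    have hb := hintr w hw ow h1 h2
    exact (T5 w z hw hz hwz ow (hb.2.2.2.2 z hz (Or.inl hwz)) h2 (h1.trans (D.hE _ _ hwz))).2
  have T7 : ∀ w z, w ∈ C → z ∈ C → On w → D.Y d < D.Y w → D.Y w < D.Y c → D.E z w → z ∈ C' := by
    intro w z hw hz ow h1 h2 hwz
    have hb := hintr w hw ow h1 h2
    exact (T5 z w hz hw hwz (hb.2.2.2.2 z hz (Or.inr hwz)) ow ((D.hE _ _ hwz).trans h2) h1).1
  have hdC' : d ∈ C' := by rw [memC']; exact ⟨hdC, ond, le_rfl, by linarith⟩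
  have hcC' : c ∈ C' := by rw [memC']; exact ⟨hcC, onc, by linarith, le_rfl⟩
  have hGood : D.Good C' d c := by
    refine ⟨hdC', hcC', hdv.trans hvc, ?_, ?_⟩
    · intro w hw hwd
      rw [memC'] at hw
      obtain ⟨hwC, ow, h1, h2⟩ := hw
      have h1' : D.Y d < D.Y w := lt_of_le_of_ne h1 (fun h => hwd (D.hY h).symm)
      refine ⟨h1', ?_⟩
      rcases lt_or_eq_of_le h2 with h2' | h2'
      · have hb := hintr w hwC ow h1' h2'
        obtain ⟨z, hz, hzE⟩ := (hin w hwC hb.2.1).2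
        exact ⟨z, T7 w z hwC hz ow h1' h2' hzE, hzE⟩
      · have := D.hY h2'
        subst this
        obtain ⟨m, hm, hmax⟩ := (C.filter (fun z => On z ∧ D.Y d < D.Y z ∧
          D.Y z < D.Y w)).exists_max_image D.Y ⟨v, by simp [hvC, onv, hdv, hvc]⟩
        simp only [Finset.mem_filter] at hm hmax
        obtain ⟨hmC, om, m1, m2⟩ := hm
        have hb := hintr m hmC om m1 m2
        obtain ⟨z, hz, hzE⟩ := (hout m hmC hb.2.2.1).2
        have hz' := T6 m z hmC hz om m1 m2 hzE
        have hmz := D.hE _ _ hzE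
        rw [memC'] at hz'
        have : z = w := by
          rcases lt_or_eq_of_le hz'.2.2.2 with h | h
          · exact absurd (hmax z ⟨hz, hz'.2.1, m1.trans hmz, h⟩) (not_le.2 hmz)
          · exact D.hY h
        subst this
        exact ⟨m, by rw [memC']; exact ⟨hmC, om, m1.le, m2.le⟩, hzE⟩
    · intro w hw hwd
      rw [memC'] at hw
      obtain ⟨hwC, ow, h1, h2⟩ := hw
      have h2' : D.Y w < D.Y c := lt_of_le_of_ne h2 (fun h => hwd (D.hY h))
      refine ⟨h2', ?_⟩
      rcases lt_or_eq_of_le h1 with h1' | h1'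
      · have hb := hintr w hwC ow h1' h2'
        obtain ⟨z, hz, hzE⟩ := (hout w hwC hb.2.2.1).2
        exact ⟨z, T6 w z hwC hz ow h1' h2' hzE, hzE⟩
      · have := D.hY h1'
        subst this
        obtain ⟨m, hm, hmin⟩ := (C.filter (fun z => On z ∧ D.Y d < D.Y z ∧
          D.Y z < D.Y c)).exists_min_image D.Y ⟨v, by simp [hvC, onv, hdv, hvc]⟩
        simp only [Finset.mem_filter] at hm hmin
        obtain ⟨hmC, om, m1, m2⟩ := hm
        have hb := hintr m hmC om m1 m2
        obtain ⟨z, hz, hzE⟩ := (hin m hmC hb.2.1).2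
        have hz' := T7 m z hmC hz om m1 m2 hzE
        have hmz := D.hE _ _ hzE
        rw [memC'] at hz'
        have : z = d := by
          rcases lt_or_eq_of_le hz'.2.2.1 with h | h
          · exact absurd (hmin z ⟨hz, hz'.2.1, h, hmz.trans m2⟩) (not_le.2 hmz)
          · exact (D.hY h).symm
        subst this
        exact ⟨m, by rw [memC']; exact ⟨hmC, om, m1.le, m2.le⟩, hzE⟩
  have hcard : C'.card < C.card := by
    apply Finset.card_lt_card
    rw [Finset.ssubset_iff_subset_ne]
    refine ⟨Finset.filter_subset _ _, ?_⟩
    intro heq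
    refine hncol ⟨p, q, fun w hw => ?_⟩
    rw [← heq, memC'] at hw
    exact hw.2.1
  obtain ⟨x1, hx1⟩ := IH C' d c hcard hGood
  obtain ⟨p1, q1, hpq1⟩ := D.ev_affine x1 d c
  set x2 : W → ℚ := fun w => if w ∈ C' then x1 w - (p1 + q1 * D.Y w) else 0 with hx2
  have x2in : ∀ w ∈ C', x2 w = x1 w - (p1 + q1 * D.Y w) := by
    intro w hw; simp only [hx2]; rw [if_pos hw]
  have x2d : x2 d = 0 := by
    rw [x2in d hdC', ← hpq1, D.ev_left]; ring
  have x2c : x2 c = 0 := by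
    rw [x2in c hcC', ← hpq1, D.ev_right x1 (hdv.trans hvc)]; ring
  have x2strict : ∀ v a b, D.Valid C' v a b → 0 < D.gap x2 v a b := by
    intro v a b hv
    rw [D.gap_affine x1 x2 (D.hE _ _ hv.2.2.2.1) (x2in v hv.1) (x2in a hv.2.1) (x2in b hv.2.2.1)]
    exact hx1 v a b hv
  have x2zero : ∀ w, ¬ (w ∈ C' ∧ D.Y d < D.Y w ∧ D.Y w < D.Y c) → x2 w = 0 := by
    intro w hw
    by_cases h : w ∈ C'
    · have h' := h
      rw [memC'] at h'
      rcases lt_or_eq_of_le h'.2.2.1 with h1 | h1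
      · rcases lt_or_eq_of_le h'.2.2.2 with h2 | h2
        · exact absurd ⟨h, h1, h2⟩ hw
        · rw [D.hY h2]; exact x2c
      · rw [← D.hY h1]; exact x2d
    · simp only [hx2]; rw [if_neg h]
  have tightval : ∀ w a2 b2, D.Valid C w a2 b2 → D.gap x w a2 b2 = 0 →
      D.Valid C' w a2 b2 ∨ D.gap x2 w a2 b2 = 0 := by
    intro w a2 b2 hw hg
    have hw' := hw
    obtain ⟨hwC, ha2, hb2, hE2, h1, h2⟩ := hw'
    have hab2 := D.hE _ _ hE2
    by_cases iw : w ∈ C' ∧ D.Y d < D.Y w ∧ D.Y w < D.Y c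
    · left
      obtain ⟨iw, i1, i2⟩ := iw
      have ow := ((memC' w).1 iw).2.1
      have hb := hintr w hwC ow i1 i2
      obtain ⟨z, hz, hzE⟩ := (hin w hwC hb.2.1).2
      have oz := hb.2.2.2.2 z hz (Or.inr hzE)
      have tz := D.touch C x hweak hw hg (hharm _ _ _ hw hg) hz (Or.inr hzE)
      have tw := (D.gap_eq_zero x w a2 b2).1 hg
      obtain ⟨p', q', hpq'⟩ := D.ev_affine x a2 b2
      have hzw := D.hE _ _ hzE
      rw [hpq'] at tz tw
      have ow' : x w = p + q * D.Y w := ow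
      have oz' : x z = p + q * D.Y z := oz
      have h5 : (q' - q) * (D.Y w - D.Y z) = 0 := by linarith
      have h6 : q' = q := by
        rcases mul_eq_zero.1 h5 with h | h
        · linarith
        · linarith
      subst h6
      have h7 : p' = p := by linarith
      subst h7
      have oa : On a2 := by
        have := D.ev_left x a2 b2; rw [hpq'] at this; exact this.symm
      have ob : On b2 := by
        have := D.ev_right x hab2; rw [hpq'] at this; exact this.symm
      have := T5 a2 b2 ha2 hb2 hE2 oa ob (h1.trans i2) (i1.trans h2)
      exact ⟨iw, this.1, this.2, hE2, h1, h2⟩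
    by_cases ia : a2 ∈ C' ∧ D.Y d < D.Y a2 ∧ D.Y a2 < D.Y c
    · left
      obtain ⟨ia, i1, i2⟩ := ia
      have oa := ((memC' a2).1 ia).2.1
      have hbm := T6 a2 b2 ha2 hb2 oa i1 i2 hE2
      have hbm' := (memC' b2).1 hbm
      have ow := (T1 w a2 b2 hab2 oa hbm'.2.1).1 hg
      exact ⟨(memC' w).2 ⟨hwC, ow, by linarith, by linarith [hbm'.2.2.2]⟩, ia, hbm, hE2, h1, h2⟩
    by_cases ib : b2 ∈ C' ∧ D.Y d < D.Y b2 ∧ D.Y b2 < D.Y c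
    · left
      obtain ⟨ib, i1, i2⟩ := ib
      have ob := ((memC' b2).1 ib).2.1
      have ham := T7 b2 a2 hb2 ha2 ob i1 i2 hE2
      have ham' := (memC' a2).1 ham
      have ow := (T1 w a2 b2 hab2 ham'.2.1 ob).1 hg
      exact ⟨(memC' w).2 ⟨hwC, ow, by linarith [ham'.2.2.1], by linarith⟩, ham, ib, hE2, h1, h2⟩
    right
    unfold gap ev
    rw [x2zero w iw, x2zero a2 ia, x2zero b2 ib]
    simp
  have hvC' : D.Valid C' v a b := by
    have := T5 a b haC hbC hE ona onb (hav.trans hvc) (hdv.trans hvb)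
    exact ⟨(memC' v).2 ⟨hvC, onv, hdv.le, hvc.le⟩, this.1, this.2, hE, hav, hvb⟩
  obtain ⟨e, he, hee⟩ := exists_eps (Finset.univ : Finset (W × W × W))
    (fun i => D.gap x i.1 i.2.1 i.2.2) (fun i => D.gap x2 i.1 i.2.1 i.2.2)
  refine ⟨fun w => x w + e * x2 w, ?_, ?_⟩
  · intro w a2 b2 hw
    rw [D.gap_add_smul]
    rcases lt_or_eq_of_le (hweak w a2 b2 hw) with h | h
    · exact (hee e he le_rfl (w, a2, b2) (Finset.mem_univ _) h).le
    · rcases tightval w a2 b2 hw h.symm with h' | h'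
      · have := x2strict _ _ _ h'
        rw [← h]; positivity
      · rw [← h, h']; simp
  · rw [D.gap_add_smul, h0]
    have := x2strict _ _ _ hvC'
    positivity

/-- Strict straightening. -/
theorem straighten [Fintype W] (D : VData W) : ∀ (n : ℕ) (C : Finset W) (s t : W), C.card = n →
    D.Good C s t → ∃ x : W → ℚ, ∀ v a b, D.Valid C v a b → 0 < D.gap x v a b := by
  classical
  intro n
  induction n using Nat.strong_induction_on with
  | _ n ih =>
    intro C s t hC hG
    by_cases hu : ∃ u ∈ C, u ≠ s ∧ u ≠ t
    · obtain ⟨u, huC, hus, hut⟩ := hu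
      obtain ⟨x, hweak, hharm, hncol⟩ := D.base C hG huC hus hut
      have one : ∀ v a b, D.Valid C v a b → ∃ z : W → ℚ,
          (∀ v a b, D.Valid C v a b → 0 ≤ D.gap z v a b) ∧ 0 < D.gap z v a b := by
        intro v a b hv
        rcases lt_or_eq_of_le (hweak v a b hv) with h | h
        · exact ⟨x, hweak, h⟩
        · exact D.resolve C hG x hweak hharm hncol
            (fun C' c' c hlt hg => ih C'.card (hC ▸ hlt) C' c' c rfl hg) hv h.symm
      have many : ∀ P : Finset (W × W × W), ∃ z : W → ℚ,
          (∀ v a b, D.Valid C v a b → 0 ≤ D.gap z v a b) ∧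
          ∀ i ∈ P, D.Valid C i.1 i.2.1 i.2.2 → 0 < D.gap z i.1 i.2.1 i.2.2 := by
        intro P
        induction P using Finset.induction_on with
        | empty => exact ⟨x, hweak, by simp⟩
        | insert i P _ ihP =>
          obtain ⟨z, hz, hzP⟩ := ihP
          by_cases hi : D.Valid C i.1 i.2.1 i.2.2
          · obtain ⟨z', hz', hpos⟩ := one _ _ _ hi
            refine ⟨fun w => z w + 1 * z' w, ?_, ?_⟩
            · intro v a b hv
              rw [D.gap_add_smul]
              have := hz v a b hv
              have := hz' v a b hv
              linarith
            · intro j hj hv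
              rw [D.gap_add_smul]
              have g1 := hz _ _ _ hv
              have g2 := hz' _ _ _ hv
              rcases Finset.mem_insert.1 hj with h | h
              · subst h; linarith
              · have := hzP j h hv; linarith
          · refine ⟨z, hz, ?_⟩
            intro j hj hv
            rcases Finset.mem_insert.1 hj with h | h
            · subst h; exact absurd hv hi
            · exact hzP j h hv
      obtain ⟨z, -, hz⟩ := many Finset.univ
      exact ⟨z, fun v a b hv => hz (v, a, b) (Finset.mem_univ _) hv⟩
    · push Not at hu
      refine ⟨fun _ => 0, ?_⟩
      intro v a b hv
      exfalso
      obtain ⟨hs, ht, hst, hin, hout⟩ := hG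
      obtain ⟨hvC, haC, hbC, hE, h1, h2⟩ := hv
      by_cases h : v = s
      · subst h
        by_cases h' : a = v
        · subst h'; exact lt_irrefl _ h1
        · exact absurd (hin a haC h').1 (not_lt.2 h1.le)
      · have := hu v hvC h
        subst this
        by_cases h' : b = v
        · subst h'; exact lt_irrefl _ h2
        · exact absurd (hout b hbC h').1 (not_lt.2 h2.le)

end VData


lemma VData.straighten_all {V : Type} [Fintype V] (D : VData V) :
    ∃ x : V → ℚ, ∀ v a b, D.Valid Finset.univ v a b → 0 < D.gap x v a b := by
  classical
  obtain ⟨B, hB⟩ : ∃ B : ℝ, ∀ v, -B ≤ D.l v ∧ D.r v ≤ B := by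
    refine ⟨∑ v, (|D.l v| + |D.r v|), fun v => ?_⟩
    have h := Finset.single_le_sum (f := fun v => |D.l v| + |D.r v|)
      (fun i _ => by positivity) (Finset.mem_univ v)
    have h1 := neg_abs_le (D.l v)
    have h2 := le_abs_self (D.r v)
    have h3 := abs_nonneg (D.l v)
    have h4 := abs_nonneg (D.r v)
    constructor <;> linarith
  obtain ⟨M, hM0, hM⟩ : ∃ M : ℚ, 0 < M ∧ ∀ v, -M < D.Y v ∧ D.Y v < M := by
    refine ⟨1 + ∑ v, |D.Y v|, by positivity, fun v => ?_⟩
    have h := Finset.single_le_sum (f := fun v => |D.Y v|)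
      (fun i _ => by positivity) (Finset.mem_univ v)
    have h1 := neg_abs_le (D.Y v)
    have h2 := le_abs_self (D.Y v)
    constructor <;> linarith
  let B' := max B 0
  have hB'0 : 0 ≤ B' := le_max_right _ _
  have hB' : ∀ v, -B' ≤ D.l v ∧ D.r v ≤ B' := fun v => by
    have := le_max_left B 0
    have := hB v
    exact ⟨by linarith [this.1, le_max_left B 0], by linarith [this.2, le_max_left B 0]⟩
  let Y : V ⊕ Bool → ℚ := Sum.elim D.Y (fun b => if b then M else -M)
  let l : V ⊕ Bool → ℝ := Sum.elim D.l (fun _ => -B')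
  let r : V ⊕ Bool → ℝ := Sum.elim D.r (fun _ => B')
  let s : V ⊕ Bool := Sum.inr false
  let t : V ⊕ Bool := Sum.inr true
  have Ys : Y s = -M := rfl
  have Yt : Y t = M := rfl
  have hYs : ∀ w, w ≠ s → Y s < Y w := by
    rintro (v | b) h
    · exact (hM v).1
    · cases b
      · exact absurd rfl h
      · change -M < M; linarith
  have hYt : ∀ w, w ≠ t → Y w < Y t := by
    rintro (v | b) h
    · exact (hM v).2
    · cases b
      · change -M < M; linarith
      · exact absurd rfl h
  have hlr : ∀ w, l w ≤ r w := by
    rintro (v | b)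
    · exact D.hlr v
    · change -B' ≤ B'; linarith
  have hls : ∀ w, -B' ≤ l w := by
    rintro (v | b)
    · exact (hB' v).1
    · exact le_rfl
  have hrs : ∀ w, r w ≤ B' := by
    rintro (v | b)
    · exact (hB' v).2
    · exact le_rfl
  have hYinj : Function.Injective Y := by
    rintro (v | b) (v' | b') h
    · exact congrArg _ (D.hY h)
    · cases b'
      · exact absurd h (hYs (Sum.inl v) (by simp [s])).ne'
      · exact absurd h (hYt (Sum.inl v) (by simp [t])).ne
    · cases b
      · exact absurd h (hYs (Sum.inl v') (by simp [s])).ne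
      · exact absurd h (hYt (Sum.inl v') (by simp [t])).ne'
    · cases b <;> cases b'
      · rfl
      · exact absurd h (hYs t (by simp [s, t])).ne
      · exact absurd h (hYs t (by simp [s, t])).ne'
      · rfl
  let Vis : V ⊕ Bool → V ⊕ Bool → ℝ → Prop := fun a b x =>
    (l a ≤ x ∧ x ≤ r a ∧ l b ≤ x ∧ x ≤ r b) ∧ ∀ v, Y a < Y v → Y v < Y b → x < l v ∨ r v < x
  let E : V ⊕ Bool → V ⊕ Bool → Prop := fun a b => Y a < Y b ∧ ∃ x, Vis a b x
  have hDE : ∀ a b, D.E a b → Vis (Sum.inl a) (Sum.inl b) (D.k a b) := by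
    intro a b h
    refine ⟨D.hk a b h, ?_⟩
    rintro (v | c) h1 h2
    · exact D.hsep a b v h h1 h2
    · cases c
      · exact absurd (hYs (Sum.inl a) (by simp [s])) (not_lt.2 h1.le)
      · exact absurd (hYt (Sum.inl b) (by simp [t])) (not_lt.2 h2.le)
  have hk : ∀ a b, ∃ k, (E a b → Vis a b k) ∧
      ∀ a0 b0, a = Sum.inl a0 → b = Sum.inl b0 → D.E a0 b0 → k = D.k a0 b0 := by
    intro a b
    by_cases h : ∃ a0 b0, a = Sum.inl a0 ∧ b = Sum.inl b0 ∧ D.E a0 b0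
    · obtain ⟨a0, b0, rfl, rfl, hE⟩ := h
      refine ⟨D.k a0 b0, fun _ => hDE a0 b0 hE, ?_⟩
      intro a1 b1 e1 e2 _
      rw [Sum.inl.inj e1, Sum.inl.inj e2]
    · by_cases hE : E a b
      · refine ⟨hE.2.choose, fun _ => hE.2.choose_spec, ?_⟩
        intro a0 b0 e1 e2 e3
        exact absurd ⟨a0, b0, e1, e2, e3⟩ h
      · refine ⟨0, fun h' => absurd h' hE, ?_⟩
        intro a0 b0 e1 e2 e3
        exact absurd ⟨a0, b0, e1, e2, e3⟩ h
  choose k hk1 hk2 using hk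
  let D' : VData (V ⊕ Bool) :=
    { Y := Y, E := E, k := k, l := l, r := r, hlr := hlr, hY := hYinj
      hE := fun a b h => h.1
      hk := fun a b h => (hk1 a b h).1
      hsep := fun a b v h h1 h2 => (hk1 a b h).2 v h1 h2 }
  have hG : D'.Good Finset.univ s t := by
    refine ⟨Finset.mem_univ _, Finset.mem_univ _, hYs t (by simp [s, t]), ?_, ?_⟩
    · intro w _ hw
      refine ⟨hYs w hw, ?_⟩
      obtain ⟨z, hz, hmax⟩ := (Finset.univ.filter (fun z => Y z < Y w ∧ l z ≤ l w ∧
        l w ≤ r z)).exists_max_image Y ⟨s, by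
          simp only [Finset.mem_filter, Finset.mem_univ, true_and]
          exact ⟨hYs w hw, hls w, (hlr w).trans (hrs w)⟩⟩
      simp only [Finset.mem_filter, Finset.mem_univ, true_and] at hz hmax
      refine ⟨z, Finset.mem_univ _, hz.1, l w, ⟨hz.2.1, hz.2.2, le_rfl, hlr w⟩, ?_⟩
      intro v h1 h2
      by_contra hc
      push Not at hc
      exact absurd (hmax v ⟨h2, hc.1, hc.2⟩) (not_le.2 h1)
    · intro w _ hw
      refine ⟨hYt w hw, ?_⟩
      obtain ⟨z, hz, hmin⟩ := (Finset.univ.filter (fun z => Y w < Y z ∧ l z ≤ l w ∧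
        l w ≤ r z)).exists_min_image Y ⟨t, by
          simp only [Finset.mem_filter, Finset.mem_univ, true_and]
          exact ⟨hYt w hw, hls w, (hlr w).trans (hrs w)⟩⟩
      simp only [Finset.mem_filter, Finset.mem_univ, true_and] at hz hmin
      refine ⟨z, Finset.mem_univ _, hz.1, l w, ⟨le_rfl, hlr w, hz.2.1, hz.2.2⟩, ?_⟩
      intro v h1 h2
      by_contra hc
      push Not at hc
      exact absurd (hmin v ⟨h1, hc.1, hc.2⟩) (not_le.2 h2)
  obtain ⟨x, hx⟩ := D'.straighten _ Finset.univ s t rfl hG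
  refine ⟨fun v => x (Sum.inl v), ?_⟩
  intro v a b hv
  obtain ⟨-, -, -, hE, h1, h2⟩ := hv
  have hE' : E (Sum.inl a) (Sum.inl b) := ⟨D.hE a b hE, _, hDE a b hE⟩
  have h := hx (Sum.inl v) (Sum.inl a) (Sum.inl b)
    ⟨Finset.mem_univ _, Finset.mem_univ _, Finset.mem_univ _, hE', h1, h2⟩
  have ek : k (Sum.inl a) (Sum.inl b) = D.k a b := hk2 _ _ a b rfl rfl hE
  have e : D'.gap x (Sum.inl v) (Sum.inl a) (Sum.inl b) =
      D.gap (fun v => x (Sum.inl v)) v a b := by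
    unfold VData.gap VData.ev
    change (if D.r v < k (Sum.inl a) (Sum.inl b) then _ else _) = _
    rw [ek]
    rfl
  rw [e] at h
  exact h


lemma VData.edges_meet {V : Type} [Fintype V] (D : VData V) (x : V → ℚ)
    (hx : ∀ v a b, D.Valid Finset.univ v a b → 0 < D.gap x v a b)
    {a b c d : V} (h1 : D.E a b) (h2 : D.E c d) (hne : ¬ (a = c ∧ b = d))
    {p q p' q' : ℚ} (hpq : ∀ y, D.ev x a b y = p + q * y) (hpq' : ∀ y, D.ev x c d y = p' + q' * y)
    (y : ℝ) (ya : (D.Y a : ℝ) ≤ y) (yb : y ≤ (D.Y b : ℝ)) (yc : (D.Y c : ℝ) ≤ y)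
    (yd : y ≤ (D.Y d : ℝ)) (heq : (p : ℝ) + q * y = p' + q' * y) :
    ∃ w, (w = a ∨ w = b) ∧ (w = c ∨ w = d) ∧ (D.Y w : ℝ) = y := by
  have hab := D.hE _ _ h1
  have hcd := D.hE _ _ h2
  by_cases had : D.Y d ≤ D.Y a
  · have : (D.Y d : ℝ) ≤ D.Y a := by exact_mod_cast had
    have e : (D.Y a : ℝ) = D.Y d := by linarith
    have e' : a = d := D.hY (by exact_mod_cast e)
    exact ⟨a, Or.inl rfl, Or.inr e', by rw [e] at ya ⊢; linarith⟩
  by_cases hcb : D.Y b ≤ D.Y c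
  · have : (D.Y b : ℝ) ≤ D.Y c := by exact_mod_cast hcb
    have e : (D.Y c : ℝ) = D.Y b := by linarith
    have e' : c = b := D.hY (by exact_mod_cast e)
    exact ⟨c, Or.inr e', Or.inl rfl, by rw [e] at yc ⊢; linarith⟩
  push Not at had hcb
  -- general one-sided statement
  have main : ∀ {a b c d : V} (_ : D.E a b) (_ : D.E c d) (_ : ¬ (a = c ∧ b = d))
      {p q p' q' : ℚ} (_ : ∀ y, D.ev x a b y = p + q * y)
      (_ : ∀ y, D.ev x c d y = p' + q' * y)
      (y : ℝ) (_ : (D.Y a : ℝ) ≤ y) (_ : y ≤ (D.Y b : ℝ)) (_ : (D.Y c : ℝ) ≤ y)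
      (_ : y ≤ (D.Y d : ℝ)) (_ : (p : ℝ) + q * y = p' + q' * y)
      (_ : D.Y a < D.Y d) (_ : D.Y c < D.Y b) (_ : D.k a b < D.k c d),
      ∃ w, (w = a ∨ w = b) ∧ (w = c ∨ w = d) ∧ (D.Y w : ℝ) = y := by
    intro a b c d h1 h2 hne p q p' q' hpq hpq' y ya yb yc yd heq had hcb hk
    have hab := D.hE _ _ h1
    have hcd := D.hE _ _ h2
    have k1 := D.hk _ _ h1
    have k2 := D.hk _ _ h2
    -- bottom
    have bot : ∃ y0 : ℚ, D.Y a ≤ y0 ∧ D.Y c ≤ y0 ∧ (y0 = D.Y a ∨ y0 = D.Y c) ∧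
        ((a = c ∧ p + q * y0 = p' + q' * y0) ∨ p + q * y0 < p' + q' * y0) := by
      rcases lt_trichotomy (D.Y a) (D.Y c) with h | h | h
      · refine ⟨D.Y c, h.le, le_rfl, Or.inr rfl, Or.inr ?_⟩
        have hl : D.k a b < D.l c := by
          rcases D.hsep a b c h1 h hcb with h' | h'
          · exact h'
          · linarith
        have := hx c a b ⟨Finset.mem_univ _, Finset.mem_univ _, Finset.mem_univ _, h1, h, hcb⟩
        rw [D.gap_left x hl, hpq] at this
        have e := D.ev_left x c d
        rw [hpq'] at e
        linarith
      · have e' := D.hY h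
        subst e'
        refine ⟨D.Y a, le_rfl, le_rfl, Or.inl rfl, Or.inl ⟨rfl, ?_⟩⟩
        have e1 := D.ev_left x a b
        have e2 := D.ev_left x a d
        rw [hpq] at e1; rw [hpq'] at e2
        linarith
      · refine ⟨D.Y a, le_rfl, h.le, Or.inl rfl, Or.inr ?_⟩
        have hl : D.r a < D.k c d := by
          rcases D.hsep c d a h2 h had with h' | h'
          · linarith
          · exact h'
        have := hx a c d ⟨Finset.mem_univ _, Finset.mem_univ _, Finset.mem_univ _, h2, h, had⟩
        rw [D.gap_right x hl, hpq'] at this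
        have e := D.ev_left x a b
        rw [hpq] at e
        linarith
    have top : ∃ y0 : ℚ, y0 ≤ D.Y b ∧ y0 ≤ D.Y d ∧ (y0 = D.Y b ∨ y0 = D.Y d) ∧
        ((b = d ∧ p + q * y0 = p' + q' * y0) ∨ p + q * y0 < p' + q' * y0) := by
      rcases lt_trichotomy (D.Y d) (D.Y b) with h | h | h
      · refine ⟨D.Y d, h.le, le_rfl, Or.inr rfl, Or.inr ?_⟩
        have hl : D.k a b < D.l d := by
          rcases D.hsep a b d h1 had h with h' | h'
          · exact h'
          · linarith
        have := hx d a b ⟨Finset.mem_univ _, Finset.mem_univ _, Finset.mem_univ _, h1, had, h⟩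
        rw [D.gap_left x hl, hpq] at this
        have e := D.ev_right x hcd
        rw [hpq'] at e
        linarith
      · have e' := D.hY h
        subst e'
        refine ⟨D.Y d, le_rfl, le_rfl, Or.inl rfl, Or.inl ⟨rfl, ?_⟩⟩
        have e1 := D.ev_right x hab
        have e2 := D.ev_right x hcd
        rw [hpq] at e1; rw [hpq'] at e2
        linarith
      · refine ⟨D.Y b, le_rfl, h.le, Or.inl rfl, Or.inr ?_⟩
        have hl : D.r b < D.k c d := by
          rcases D.hsep c d b h2 hcb h with h' | h'
          · linarith
          · exact h'
        have := hx b c d ⟨Finset.mem_univ _, Finset.mem_univ _, Finset.mem_univ _, h2, hcb, h⟩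
        rw [D.gap_right x hl, hpq'] at this
        have e := D.ev_right x hab
        rw [hpq] at e
        linarith
    obtain ⟨y0, i1, i2, i3, i4⟩ := bot
    obtain ⟨y1, j1, j2, j3, j4⟩ := top
    have y0y : (y0 : ℝ) ≤ y := by rcases i3 with h | h <;> rw [h] <;> assumption
    have yy1 : y ≤ (y1 : ℝ) := by rcases j3 with h | h <;> rw [h] <;> assumption
    have y01 : y0 < y1 := by rcases i3 with h | h <;> rcases j3 with h' | h' <;> rw [h, h'] <;> assumption
    have y01' : (y0 : ℝ) < y1 := by exact_mod_cast y01
    have c0 : 0 ≤ ((p' : ℝ) + q' * y0) - (p + q * y0) := by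
      have : p + q * y0 ≤ p' + q' * y0 := by
        rcases i4 with h | h
        · exact h.2.le
        · exact h.le
      have : (p : ℝ) + q * y0 ≤ p' + q' * y0 := by exact_mod_cast this
      linarith
    have c1 : 0 ≤ ((p' : ℝ) + q' * y1) - (p + q * y1) := by
      have : p + q * y1 ≤ p' + q' * y1 := by
        rcases j4 with h | h
        · exact h.2.le
        · exact h.le
      have : (p : ℝ) + q * y1 ≤ p' + q' * y1 := by exact_mod_cast this
      linarith
    have key : (y1 - y) * (((p' : ℝ) + q' * y0) - (p + q * y0)) +
        (y - y0) * (((p' : ℝ) + q' * y1) - (p + q * y1)) = 0 := by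
      linear_combination (-1 : ℝ) * (y1 - y0) * heq
    have t1 : 0 ≤ (y1 - y) * (((p' : ℝ) + q' * y0) - (p + q * y0)) :=
      mul_nonneg (by linarith) c0
    have t2 : 0 ≤ (y - y0) * (((p' : ℝ) + q' * y1) - (p + q * y1)) :=
      mul_nonneg (by linarith) c1
    have t1' : (y1 - y) * (((p' : ℝ) + q' * y0) - (p + q * y0)) = 0 := by linarith
    have t2' : (y - y0) * (((p' : ℝ) + q' * y1) - (p + q * y1)) = 0 := by linarith
    rcases i4 with ⟨i4, -⟩ | i4
    · rcases j4 with ⟨j4, -⟩ | j4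
      · exact absurd ⟨i4, j4⟩ hne
      · have : (p : ℝ) + q * y1 < p' + q' * y1 := by exact_mod_cast j4
        have : y = y0 := by
          rcases mul_eq_zero.1 t2' with h | h
          · linarith
          · linarith
        refine ⟨a, Or.inl rfl, Or.inl i4, ?_⟩
        subst i4
        rw [this]
        rcases i3 with h | h <;> rw [h]
    · have : (p : ℝ) + q * y0 < p' + q' * y0 := by exact_mod_cast i4
      have hy : y = y1 := by
        rcases mul_eq_zero.1 t1' with h | h
        · linarith
        · linarith
      rcases j4 with ⟨j4, -⟩ | j4
      · refine ⟨b, Or.inr rfl, Or.inr j4, ?_⟩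
        subst j4
        rw [hy]
        rcases j3 with h | h <;> rw [h]
      · have : (p : ℝ) + q * y1 < p' + q' * y1 := by exact_mod_cast j4
        rw [hy] at heq
        linarith
  rcases lt_trichotomy (D.k a b) (D.k c d) with hk | hk | hk
  · exact main h1 h2 hne hpq hpq' y ya yb yc yd heq had hcb hk
  · exfalso
    have k1 := D.hk _ _ h1
    have k2 := D.hk _ _ h2
    apply hne
    constructor
    · rcases lt_trichotomy (D.Y a) (D.Y c) with h | h | h
      · rcases D.hsep a b c h1 h hcb with h' | h' <;> linarith
      · exact D.hY h
      · rcases D.hsep c d a h2 h had with h' | h' <;> linarith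
    · rcases lt_trichotomy (D.Y d) (D.Y b) with h | h | h
      · rcases D.hsep a b d h1 had h with h' | h' <;> linarith
      · exact (D.hY h).symm
      · rcases D.hsep c d b h2 hcb h with h' | h' <;> linarith
  · obtain ⟨w, w1, w2, w3⟩ := main h2 h1 (fun h => hne ⟨h.1.symm, h.2.symm⟩) hpq' hpq y yc yd ya yb
      heq.symm hcb had hk
    exact ⟨w, w2, w1, w3⟩

lemma mem_seg_line {P P1 P2 : Pt} (h : P ∈ segment ℝ P1 P2) (h12 : P1.2 < P2.2) :
    P1.2 ≤ P.2 ∧ P.2 ≤ P2.2 ∧ ∀ N p q : ℝ, P1.1 = N * (p + q * P1.2) → P2.1 = N * (p + q * P2.2) →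
      P.1 = N * (p + q * P.2) := by
  obtain ⟨s, t, hs, ht, hst, rfl⟩ := h
  have e : s = 1 - t := by linarith
  subst e
  simp only [Prod.fst_add, Prod.snd_add, Prod.smul_fst, Prod.smul_snd, smul_eq_mul]
  refine ⟨by nlinarith, by nlinarith, ?_⟩
  intro N p q h1 h2
  rw [h1, h2]; ring

lemma chainSet_pair (p q : Pt) : chainSet [p, q] = segment ℝ p q := by
  simp [chainSet, chainSegs]

lemma simple_pair {p q : Pt} (h : p ≠ q) : IsSimpleChain [p, q] := by
  refine ⟨by simp, by simp [h], ?_⟩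
  intro i j hij hi hj
  simp [chainSegs] at hi hj
  omega

lemma genuine_pair (p q : Pt) : GenuineBends [p, q] := by
  intro i h
  simp at h

lemma exists_rank {V : Type} [Fintype V] (f : V → ℝ) :
    ∃ Y : V → ℕ, Function.Injective Y ∧ ∀ v w, f v < f w → Y v < Y w := by
  classical
  let e := Fintype.equivFin V
  let key : V → ℝ ×ₗ Fin (Fintype.card V) := fun v => toLex (f v, e v)
  have hkey : Function.Injective key := by
    intro v w h
    have : (f v, e v) = (f w, e w) := toLex.injective h
    exact e.injective (Prod.ext_iff.1 this).2
  have mono : ∀ v w, key v < key w → (Finset.univ.filter (fun z => key z < key v)).card <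
      (Finset.univ.filter (fun z => key z < key w)).card := by
    intro v w h
    apply Finset.card_lt_card
    rw [Finset.ssubset_iff_of_subset]
    · exact ⟨v, by simp [h], by simp⟩
    · intro z hz
      simp only [Finset.mem_filter, Finset.mem_univ, true_and] at hz ⊢
      exact hz.trans h
  refine ⟨fun v => (Finset.univ.filter (fun z => key z < key v)).card, ?_, ?_⟩
  · intro v w h
    by_contra hne
    rcases lt_or_gt_of_ne (hkey.ne hne) with h' | h'
    · exact absurd h (mono _ _ h').ne
    · exact absurd h (mono _ _ h').ne'
  · intro v w h
    apply mono
    rw [Prod.Lex.lt_iff]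
    left; exact h

lemma exists_denom {V : Type} [Fintype V] (x : V → ℚ) :
    ∃ N : ℕ, 0 < N ∧ ∀ v, ∃ m : ℤ, (N : ℚ) * x v = m := by
  classical
  refine ⟨∏ v, (x v).den, Finset.prod_pos (fun v _ => (x v).den_pos), fun v => ?_⟩
  obtain ⟨c, hc⟩ := Finset.dvd_prod_of_mem (fun v => (x v).den) (Finset.mem_univ v)
  refine ⟨c * (x v).num, ?_⟩
  rw [hc]
  push_cast
  have := Rat.mul_den_eq_num (x v)
  rw [← this]; ring

theorem back_dir {V : Type} [Fintype V] (A : V → V → Prop) (G : SimpleGraph V)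
    (hAG : ∀ u v, G.Adj u v ↔ (A u v ∨ A v u)) (D : OrthDrawing G) (hD : D.IsPlanar)
    (hA : ∀ u v, A u v → ∃ p q : Pt, D.chain u v = [p, q] ∧ p.1 = q.1 ∧ p.2 < q.2 ∧
        p ∈ (D.box u).pts ∧ q ∈ (D.box v).pts) :
    ∃ D : PolylineDrawing G, D.IsStraightLine ∧ D.IsPlanar ∧ D.IntCoords ∧
      ∀ u v, A u v → (D.pos u).2 < (D.pos v).2 := by
  classical
  obtain ⟨hdisj, -, -, hcb, -⟩ := hD
  obtain ⟨Y, hYinj, hYlt⟩ := exists_rank (fun v => (D.box v).y1)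
  have hYle : ∀ v w, Y v < Y w → (D.box v).y1 ≤ (D.box w).y1 := by
    intro v w h
    by_contra hc
    push Not at hc
    exact absurd (hYlt w v hc) (by omega)
  have hboth : ∀ v w X y, v ≠ w → (D.box v).x1 ≤ X → X ≤ (D.box v).x2 → (D.box w).x1 ≤ X →
      X ≤ (D.box w).x2 → (D.box v).y1 ≤ y → y ≤ (D.box v).y2 → (D.box w).y1 ≤ y →
      y ≤ (D.box w).y2 → False := by
    intro v w X y hvw a1 a2 a3 a4 a5 a6 a7 a8
    have m1 : ((X, y) : Pt) ∈ (D.box v).pts := ⟨⟨a1, a2⟩, ⟨a5, a6⟩⟩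
    have m2 : ((X, y) : Pt) ∈ (D.box w).pts := ⟨⟨a3, a4⟩, ⟨a7, a8⟩⟩
    exact Set.disjoint_left.1 (hdisj v w hvw) m1 m2
  have hAne : ∀ u v, A u v → u ≠ v := fun u v h => ((hAG u v).2 (Or.inl h)).ne
  let k : V → V → ℝ := fun u v => if h : A u v then (hA u v h).choose.1 else 0
  have hkk : ∀ u v, A u v → ∃ p q : Pt, D.chain u v = [p, q] ∧ p.1 = k u v ∧ q.1 = k u v ∧
      p.2 < q.2 ∧ (((D.box u).x1 ≤ k u v ∧ k u v ≤ (D.box u).x2) ∧ (D.box u).y1 ≤ p.2 ∧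
        p.2 ≤ (D.box u).y2) ∧ (((D.box v).x1 ≤ k u v ∧ k u v ≤ (D.box v).x2) ∧
        (D.box v).y1 ≤ q.2 ∧ q.2 ≤ (D.box v).y2) := by
    intro u v h
    have hs := (hA u v h).choose_spec
    have e : k u v = (hA u v h).choose.1 := by simp only [k]; rw [dif_pos h]
    obtain ⟨q, h1, h2, h3, h4, h5⟩ := hs
    refine ⟨(hA u v h).choose, q, h1, e.symm, by rw [e, h2], h3, ?_, ?_⟩
    · rw [e]; exact h4
    · rw [e, h2]; exact h5
  have hEy : ∀ a b, A a b → (D.box a).y1 < (D.box b).y1 := by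
    intro a b h
    obtain ⟨p, q, -, -, -, hpq, ⟨⟨a1, a2⟩, a3, a4⟩, ⟨⟨b1, b2⟩, b3, b4⟩⟩ := hkk a b h
    by_contra hc
    push Not at hc
    rcases le_total q.2 (D.box a).y2 with h' | h'
    · exact hboth a b (k a b) q.2 (hAne a b h) a1 a2 b1 b2 (by linarith) h' b3 b4
    · exact hboth a b (k a b) (D.box a).y2 (hAne a b h) a1 a2 b1 b2 (by linarith) le_rfl
        (by linarith) (by linarith)
  let DV : VData V :=
    { Y := fun v => (Y v : ℚ)
      E := A
      k := k
      l := fun v => (D.box v).x1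
      r := fun v => (D.box v).x2
      hlr := fun v => (D.box v).hx
      hY := fun v w h => hYinj (by simpa using h)
      hE := fun a b h => by
        have := hYlt a b (hEy a b h)
        exact_mod_cast this
      hk := fun a b h => by
        obtain ⟨p, q, -, -, -, hpq, ⟨⟨a1, a2⟩, a3, a4⟩, ⟨⟨b1, b2⟩, b3, b4⟩⟩ := hkk a b h
        exact ⟨a1, a2, b1, b2⟩
      hsep := fun a b v h h1 h2 => by
        have h1 : Y a < Y v := by exact_mod_cast h1
        have h2 : Y v < Y b := by exact_mod_cast h2
        have va : v ≠ a := by rintro rfl; omega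
        have vb : v ≠ b := by rintro rfl; omega
        by_contra hc
        push Not at hc
        obtain ⟨p, q, hch, hp, hq, hpq, ⟨⟨a1, a2⟩, a3, a4⟩, ⟨⟨b1, b2⟩, b3, b4⟩⟩ := hkk a b h
        have y1 := hYle a v h1
        have y2 := hYle v b h2
        have y3 := (D.box v).hy
        rcases le_total (D.box v).y1 p.2 with h3 | h3
        · exact hboth v a (k a b) (D.box v).y1 va hc.1 hc.2 a1 a2 le_rfl y3 y1 (by linarith)
        rcases le_total q.2 (D.box v).y1 with h4 | h4
        · exact hboth v b (k a b) (D.box b).y1 vb hc.1 hc.2 b1 b2 y2 (by linarith) le_rfl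
            (D.box b).hy
        have hmem : ((k a b, (D.box v).y1) : Pt) ∈ D.curve a b ∩ (D.box v).pts := by
          refine ⟨?_, ⟨⟨hc.1, hc.2⟩, ⟨le_rfl, y3⟩⟩⟩
          unfold OrthDrawing.curve
          rw [hch, chainSet_pair]
          refine ⟨(q.2 - (D.box v).y1) / (q.2 - p.2), ((D.box v).y1 - p.2) / (q.2 - p.2), ?_, ?_,
            ?_, ?_⟩
          · exact div_nonneg (by linarith) (by linarith)
          · exact div_nonneg (by linarith) (by linarith)
          · have : q.2 - p.2 ≠ 0 := by linarith
            field_simp; ring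
          · have : q.2 - p.2 ≠ 0 := by linarith
            ext
            · simp only [Prod.fst_add, Prod.smul_fst, smul_eq_mul, hp, hq]
              field_simp; ring
            · simp only [Prod.snd_add, Prod.smul_snd, smul_eq_mul]
              field_simp; ring
        have := hcb a b v ((hAG a b).2 (Or.inl h)) hmem
        rcases this with h' | h'
        · exact va h'.1
        · exact vb h'.1 }
  obtain ⟨x, hx⟩ := DV.straighten_all
  obtain ⟨N, hN0, hN⟩ := exists_denom x
  have hN0' : (N : ℝ) ≠ 0 := by positivity
  let pos : V → Pt := fun v => ((N : ℝ) * (x v : ℝ), (Y v : ℝ))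
  have posinj : Function.Injective pos := by
    intro v w h
    have : (Y v : ℝ) = Y w := (Prod.ext_iff.1 h).2
    exact hYinj (by exact_mod_cast this)
  have hYA : ∀ a b, A a b → Y a < Y b := fun a b h => hYlt a b (hEy a b h)
  have hseg : ∀ a b P, A a b → P ∈ segment ℝ (pos a) (pos b) → ∀ p q : ℚ,
      (∀ y, DV.ev x a b y = p + q * y) →
      (Y a : ℝ) ≤ P.2 ∧ P.2 ≤ (Y b : ℝ) ∧ P.1 = N * (p + q * P.2) := by
    intro a b P h hP p q hpq
    have hlt : (Y a : ℝ) < Y b := by exact_mod_cast hYA a b h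
    obtain ⟨h1, h2, h3⟩ := mem_seg_line hP hlt
    refine ⟨h1, h2, h3 N p q ?_ ?_⟩
    · have e := DV.ev_left x a b
      rw [hpq] at e
      change (N : ℝ) * (x a : ℝ) = N * (p + q * (Y a : ℝ))
      rw [← e]
      simp only [DV]; push_cast; ring
    · have e := DV.ev_right x (DV.hE a b h)
      rw [hpq] at e
      change (N : ℝ) * (x b : ℝ) = N * (p + q * (Y b : ℝ))
      rw [← e]
      simp only [DV]; push_cast; ring
  have horient : ∀ u v, G.Adj u v → ∃ a b, A a b ∧ s(a, b) = s(u, v) ∧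
      segment ℝ (pos u) (pos v) = segment ℝ (pos a) (pos b) ∧
      ∀ w, (w = a ∨ w = b) → w ∈ ({u, v} : Set V) := by
    intro u v h
    rcases (hAG u v).1 h with h | h
    · exact ⟨u, v, h, rfl, rfl, fun w hw => hw⟩
    · exact ⟨v, u, h, Sym2.eq_swap, segment_symm _ _ _, fun w hw => hw.symm⟩
  let DP : PolylineDrawing G := ⟨pos, fun _ _ => [], fun _ _ => rfl⟩
  have hcurve : ∀ u v, DP.curve u v = segment ℝ (pos u) (pos v) := fun u v => chainSet_pair _ _
  refine ⟨DP, fun _ _ => rfl, ⟨posinj, ?_, ?_, ?_⟩, ?_, ?_⟩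
  · intro u v h
    exact ⟨simple_pair (posinj.ne h.ne), genuine_pair _ _⟩
  · intro u v w h hwu hwv hmem
    rw [hcurve] at hmem
    obtain ⟨a, b, hab, hs, hsg, hm⟩ := horient u v h
    rw [hsg] at hmem
    have hwa : w ≠ a := by
      rintro rfl
      rcases hm w (Or.inl rfl) with h | h
      · exact hwu h
      · exact hwv h
    have hwb : w ≠ b := by
      rintro rfl
      rcases hm w (Or.inr rfl) with h | h
      · exact hwu h
      · exact hwv h
    obtain ⟨p, q, hpq⟩ := DV.ev_affine x a b
    obtain ⟨h1, h2, h3⟩ := hseg a b _ hab hmem p q hpq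
    have h1' : Y a ≤ Y w := by
      change (Y a : ℝ) ≤ (Y w : ℝ) at h1
      exact_mod_cast h1
    have h2' : Y w ≤ Y b := by
      change (Y w : ℝ) ≤ (Y b : ℝ) at h2
      exact_mod_cast h2
    have h1'' : Y a < Y w := lt_of_le_of_ne h1' (fun h => hwa (hYinj h).symm)
    have h2'' : Y w < Y b := lt_of_le_of_ne h2' (fun h => hwb (hYinj h))
    have hg := hx w a b ⟨Finset.mem_univ _, Finset.mem_univ _, Finset.mem_univ _, hab,
      by change (Y a : ℚ) < (Y w : ℚ); exact_mod_cast h1'',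
      by change (Y w : ℚ) < (Y b : ℚ); exact_mod_cast h2''⟩
    apply hg.ne'
    rw [DV.gap_eq_zero, hpq]
    change (N : ℝ) * (x w : ℝ) = N * (p + q * (Y w : ℝ)) at h3
    have h4 := mul_left_cancel₀ hN0' h3
    change x w = p + q * (Y w : ℚ)
    exact_mod_cast h4
  · intro u v u' v' h h' hne P hP
    rw [hcurve, hcurve] at hP
    obtain ⟨a, b, hab, hs, hsg, hm⟩ := horient u v h
    obtain ⟨c, d, hcd, hs', hsg', hm'⟩ := horient u' v' h'
    rw [hsg, hsg'] at hP
    obtain ⟨p, q, hpq⟩ := DV.ev_affine x a b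
    obtain ⟨p', q', hpq'⟩ := DV.ev_affine x c d
    obtain ⟨h1, h2, h3⟩ := hseg a b _ hab hP.1 p q hpq
    obtain ⟨i1, i2, i3⟩ := hseg c d _ hcd hP.2 p' q' hpq'
    have e := mul_left_cancel₀ hN0' (h3.symm.trans i3)
    obtain ⟨w, w1, w2, w3⟩ := DV.edges_meet x hx hab hcd (by
      rintro ⟨rfl, rfl⟩; exact hne (hs.symm.trans hs')) hpq hpq' P.2
      (by simpa [DV] using h1) (by simpa [DV] using h2) (by simpa [DV] using i1)
      (by simpa [DV] using i2) e
    refine ⟨w, ⟨hm w w1, hm' w w2⟩, ?_⟩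
    have w3' : (Y w : ℝ) = P.2 := by simpa [DV] using w3
    have hw : pos w ∈ segment ℝ (pos a) (pos b) := by
      rcases w1 with rfl | rfl
      · exact left_mem_segment _ _ _
      · exact right_mem_segment _ _ _
    obtain ⟨j1, j2, j3⟩ := hseg a b _ hab hw p q hpq
    change pos w = P
    ext
    · rw [j3, h3]
      change (N : ℝ) * (p + q * (Y w : ℝ)) = _
      rw [w3']
    · exact w3'
  · intro P hP
    rcases hP with ⟨v, rfl⟩ | hP
    · obtain ⟨m, hm⟩ := hN v
      refine ⟨⟨m, ?_⟩, ⟨(Y v : ℤ), ?_⟩⟩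
      · change (N : ℝ) * (x v : ℝ) = m
        exact_mod_cast hm
      · change (Y v : ℝ) = _
        push_cast; rfl
    · simp [DP] at hP
  · intro u v h
    change (Y u : ℝ) < (Y v : ℝ)
    exact_mod_cast hYA u v h


/-! ### From upward drawings to visibility representations -/

section Fwd

variable {V : Type}

/-- x-coordinate at height `h` of an object (an edge or a vertex). -/
noncomputable def xAt (pos : V → Pt) (o : V × V) (h : ℝ) : ℝ :=
  (pos o.1).1 + ((pos o.2).1 - (pos o.1).1) / ((pos o.2).2 - (pos o.1).2) * (h - (pos o.1).2)

/-- Height `h` is in the range of the object. -/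
def InR (pos : V → Pt) (o : V × V) (h : ℝ) : Prop := (pos o.1).2 ≤ h ∧ h ≤ (pos o.2).2

/-- Object `a` is left of object `b` at some height. -/
def Lf (pos : V → Pt) (a b : V × V) : Prop :=
  ∃ h, InR pos a h ∧ InR pos b h ∧ xAt pos a h < xAt pos b h

lemma xAt_affine (pos : V → Pt) (o : V × V) : ∃ p q : ℝ, ∀ h, xAt pos o h = p + q * h := by
  refine ⟨(pos o.1).1 - ((pos o.2).1 - (pos o.1).1) / ((pos o.2).2 - (pos o.1).2) * (pos o.1).2,
    ((pos o.2).1 - (pos o.1).1) / ((pos o.2).2 - (pos o.1).2), ?_⟩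
  intro h; unfold xAt; ring

lemma xAt_left (pos : V → Pt) (o : V × V) : xAt pos o (pos o.1).2 = (pos o.1).1 := by
  simp [xAt]

lemma xAt_right (pos : V → Pt) (o : V × V) (h : (pos o.1).2 < (pos o.2).2) :
    xAt pos o (pos o.2).2 = (pos o.2).1 := by
  have : (pos o.2).2 - (pos o.1).2 ≠ 0 := by linarith
  unfold xAt; field_simp; ring

lemma xAt_mem (pos : V → Pt) (o : V × V) {h : ℝ} (ho : (pos o.1).2 < (pos o.2).2)
    (hh : InR pos o h) : ((xAt pos o h, h) : Pt) ∈ segment ℝ (pos o.1) (pos o.2) := by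
  obtain ⟨h1, h2⟩ := hh
  have hne : (pos o.2).2 - (pos o.1).2 ≠ 0 := by linarith
  refine ⟨((pos o.2).2 - h) / ((pos o.2).2 - (pos o.1).2),
    (h - (pos o.1).2) / ((pos o.2).2 - (pos o.1).2), ?_, ?_, ?_, ?_⟩
  · exact div_nonneg (by linarith) (by linarith)
  · exact div_nonneg (by linarith) (by linarith)
  · field_simp; ring
  · ext
    · simp only [Prod.fst_add, Prod.smul_fst, smul_eq_mul]
      unfold xAt
      field_simp; ring
    · simp only [Prod.snd_add, Prod.smul_snd, smul_eq_mul]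
      field_simp; ring

/-- Non-crossing. -/
lemma noncross (pos : V → Pt) (A : V → V → Prop)
    (hup : ∀ u v, A u v → (pos u).2 < (pos v).2)
    (he : ∀ u v x y P, A u v → A x y → ¬ (u = x ∧ v = y) → P ∈ segment ℝ (pos u) (pos v) →
      P ∈ segment ℝ (pos x) (pos y) → pos u = P ∨ pos v = P)
    {a b : V × V} (ha : A a.1 a.2 ∨ a.1 = a.2) (hb : A b.1 b.2 ∨ b.1 = b.2)
    {h h' : ℝ} (a1 : InR pos a h) (b1 : InR pos b h) (hl : xAt pos a h < xAt pos b h)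
    (a2 : InR pos a h') (b2 : InR pos b h') : xAt pos a h' ≤ xAt pos b h' := by
  by_contra hc
  push Not at hc
  have hne : h ≠ h' := by rintro rfl; linarith
  have nd : ∀ o : V × V, (A o.1 o.2 ∨ o.1 = o.2) → InR pos o h → InR pos o h' → A o.1 o.2 := by
    intro o ho o1 o2
    rcases ho with ho | ho
    · exact ho
    · exfalso
      unfold InR at o1 o2
      rw [ho] at o1 o2
      apply hne
      linarith [o1.1, o1.2, o2.1, o2.2]
  have Aa := nd a ha a1 a2
  have Ab := nd b hb b1 b2
  obtain ⟨p, q, hpq⟩ := xAt_affine pos a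
  obtain ⟨p', q', hpq'⟩ := xAt_affine pos b
  rw [hpq, hpq'] at hl hc
  -- crossing parameter
  set α := (p' + q' * h) - (p + q * h) with hα
  set β := (p + q * h') - (p' + q' * h') with hβ
  have α0 : 0 < α := by linarith
  have β0 : 0 < β := by linarith
  have hab : α + β ≠ 0 := by positivity
  set m := (β * h + α * h') / (α + β) with hm
  have hmm : m * (α + β) = β * h + α * h' := by rw [hm]; field_simp
  have hcross : p + q * m = p' + q' * m := by
    have : (α + β) * (p + q * m - (p' + q' * m)) = 0 := by
      have : (α + β) * (p + q * m - (p' + q' * m)) =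
        (α + β) * (p - p') + (q - q') * (m * (α + β)) := by ring
      rw [this, hmm, hα, hβ]; ring
    rcases mul_eq_zero.1 this with h | h
    · exact absurd h hab
    · linarith
  have strict : ∀ o : V × V, InR pos o h → InR pos o h' →
      (pos o.1).2 < m ∧ m < (pos o.2).2 := by
    intro o ⟨o1, o2⟩ ⟨o3, o4⟩
    have hs : 0 < α + β := by positivity
    rcases lt_or_gt_of_ne hne with hlt | hlt
    · have u1 : h < m := by
        by_contra hcon
        push Not at hcon
        nlinarith [mul_le_mul_of_nonneg_right hcon hs.le]
      have u2 : m < h' := by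
        by_contra hcon
        push Not at hcon
        nlinarith [mul_le_mul_of_nonneg_right hcon hs.le]
      constructor <;> linarith
    · have u1 : h' < m := by
        by_contra hcon
        push Not at hcon
        nlinarith [mul_le_mul_of_nonneg_right hcon hs.le]
      have u2 : m < h := by
        by_contra hcon
        push Not at hcon
        nlinarith [mul_le_mul_of_nonneg_right hcon hs.le]
      constructor <;> linarith
  have sa := strict a a1 a2
  have sb := strict b b1 b2
  have ma := xAt_mem pos a (hup _ _ Aa) (h := m) ⟨sa.1.le, sa.2.le⟩
  have mb := xAt_mem pos b (hup _ _ Ab) (h := m) ⟨sb.1.le, sb.2.le⟩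
  have e : xAt pos a m = xAt pos b m := by rw [hpq, hpq', hcross]
  rw [← e] at mb
  have hneq : ¬ (a.1 = b.1 ∧ a.2 = b.2) := by
    intro h
    have : a = b := Prod.ext h.1 h.2
    subst this
    have e1 := hpq 0
    have e2 := hpq 1
    rw [hpq'] at e1 e2
    have : p' = p := by linarith
    have : q' = q := by linarith
    subst_vars
    linarith
  rcases he _ _ _ _ _ Aa Ab hneq ma mb with h | h
  · have : (pos a.1).2 = m := by rw [h]
    linarith
  · have : (pos a.2).2 = m := by rw [h]
    linarith

/-- A linear order compatible with the left-of relation. -/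
lemma exists_order [Fintype V] (pos : V → Pt) (A : V → V → Prop)
    (hup : ∀ u v, A u v → (pos u).2 < (pos v).2)
    (he : ∀ u v x y P, A u v → A x y → ¬ (u = x ∧ v = y) → P ∈ segment ℝ (pos u) (pos v) →
      P ∈ segment ℝ (pos x) (pos y) → pos u = P ∨ pos v = P) :
    ∃ K : {o : V × V // A o.1 o.2 ∨ o.1 = o.2} → ℕ, Function.Injective K ∧
      ∀ a b, Lf pos a.1 b.1 → K a < K b := by
  classical
  have key : ∀ S : Finset {o : V × V // A o.1 o.2 ∨ o.1 = o.2},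
      ∃ ρ : {o : V × V // A o.1 o.2 ∨ o.1 = o.2} → ℝ,
        ∀ a ∈ S, ∀ b ∈ S, Lf pos a.1 b.1 → ρ a < ρ b := by
    intro S
    refine Finset.induction_on_max_value
      (fun o : {o : V × V // A o.1 o.2 ∨ o.1 = o.2} => (pos o.1.1).2) S ?_ ?_
    · exact ⟨fun _ => 0, by simp⟩
    · intro f S hf hmax ih
      obtain ⟨ρ, hρ⟩ := ih
      obtain ⟨m, m1, m2⟩ := Order.exists_between_finsets
        ((S.filter (fun a => Lf pos a.1 f.1)).image ρ)
        ((S.filter (fun b => Lf pos f.1 b.1)).image ρ) (by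
          intro x hx y hy
          simp only [Finset.mem_image, Finset.mem_filter] at hx hy
          obtain ⟨a, ⟨haS, ⟨y1, a1, f1, l1⟩⟩, rfl⟩ := hx
          obtain ⟨b, ⟨hbS, ⟨y2, f2, b2, l2⟩⟩, rfl⟩ := hy
          apply hρ a haS b hbS
          have ma := hmax a haS
          have mb := hmax b hbS
          rcases le_total y1 y2 with h | h
          · have b1 : InR pos b.1 y1 := ⟨mb.trans f1.1, h.trans b2.2⟩
            have := noncross pos A hup he f.2 b.2 f2 b2 l2 f1 b1
            exact ⟨y1, a1, b1, lt_of_lt_of_le l1 this⟩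
          · have a2 : InR pos a.1 y2 := ⟨ma.trans f2.1, h.trans a1.2⟩
            have := noncross pos A hup he a.2 f.2 a1 f1 l1 a2 f2
            exact ⟨y2, a2, b2, lt_of_le_of_lt this l2⟩)
      refine ⟨Function.update ρ f m, ?_⟩
      intro a ha b hb hl
      rcases Finset.mem_insert.1 ha with rfl | ha'
      · rcases Finset.mem_insert.1 hb with rfl | hb'
        · obtain ⟨h, -, -, h3⟩ := hl
          exact absurd h3 (lt_irrefl _)
        · have hne : b ≠ a := by rintro rfl; exact hf hb'
          rw [Function.update_self, Function.update_of_ne hne]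
          exact m2 _ (Finset.mem_image_of_mem _ (by simp [hb', hl]))
      · have hne : a ≠ f := by rintro rfl; exact hf ha'
        rcases Finset.mem_insert.1 hb with rfl | hb'
        · rw [Function.update_self, Function.update_of_ne hne]
          exact m1 _ (Finset.mem_image_of_mem _ (by simp [ha', hl]))
        · have hne' : b ≠ f := by rintro rfl; exact hf hb'
          rw [Function.update_of_ne hne, Function.update_of_ne hne']
          exact hρ a ha' b hb' hl
  obtain ⟨ρ, hρ⟩ := key Finset.univ
  obtain ⟨K, hK, hK'⟩ := exists_rank ρ
  exact ⟨K, hK, fun a b h => hK' _ _ (hρ a (Finset.mem_univ _) b (Finset.mem_univ _) h)⟩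

lemma vseg {P : Pt} {X c d : ℝ} (h : P ∈ segment ℝ ((X, c) : Pt) (X, d)) :
    P.1 = X ∧ ((c ≤ P.2 ∧ P.2 ≤ d) ∨ (d ≤ P.2 ∧ P.2 ≤ c)) := by
  obtain ⟨s, t, hs, ht, hst, rfl⟩ := h
  have e : s = 1 - t := by linarith
  subst e
  simp only [Prod.fst_add, Prod.snd_add, Prod.smul_fst, Prod.smul_snd, smul_eq_mul]
  refine ⟨by ring, ?_⟩
  rcases le_total c d with h | h
  · left; constructor <;> nlinarith
  · right; constructor <;> nlinarith

theorem fwd_dir [Fintype V] (A : V → V → Prop) (G : SimpleGraph V)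
    (hAG : ∀ u v, G.Adj u v ↔ (A u v ∨ A v u)) (D : PolylineDrawing G) (hS : D.IsStraightLine)
    (hD : D.IsPlanar) (hI : D.IntCoords) (hup : ∀ u v, A u v → (D.pos u).2 < (D.pos v).2) :
    ∃ D : OrthDrawing G, D.IsPlanar ∧ D.IsVR ∧ D.IntCoords ∧
      ∀ u v, A u v → ∃ p q : Pt, D.chain u v = [p, q] ∧ p.1 = q.1 ∧ p.2 < q.2 ∧
        p ∈ (D.box u).pts ∧ q ∈ (D.box v).pts := by
  classical
  obtain ⟨hinj, -, hvert, hedge⟩ := hD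
  have hcurve : ∀ u v, D.curve u v = segment ℝ (D.pos u) (D.pos v) := by
    intro u v
    unfold PolylineDrawing.curve PolylineDrawing.chain
    rw [hS u v]
    exact chainSet_pair _ _
  set pos := D.pos with hpos
  have hadj : ∀ u v, A u v → G.Adj u v := fun u v h => (hAG u v).2 (Or.inl h)
  have he : ∀ u v x y P, A u v → A x y → ¬ (u = x ∧ v = y) → P ∈ segment ℝ (pos u) (pos v) →
      P ∈ segment ℝ (pos x) (pos y) → pos u = P ∨ pos v = P := by
    intro u v x y P h1 h2 hne p1 p2
    have hs : s(u, v) ≠ s(x, y) := by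
      intro h
      rcases Sym2.eq_iff.1 h with h | h
      · exact hne h
      · obtain ⟨rfl, rfl⟩ := h
        have := hup _ _ h1
        have := hup _ _ h2
        linarith
    have := hedge u v x y (hadj _ _ h1) (hadj _ _ h2) hs
      ⟨by rw [hcurve]; exact p1, by rw [hcurve]; exact p2⟩
    obtain ⟨w, ⟨hw, -⟩, rfl⟩ := this
    rcases hw with hw | hw
    · left; rw [hw]
    · right; rw [hw]
  obtain ⟨K, hK, hKL⟩ := exists_order pos A hup he
  -- incident objects
  let Inc : V → {o : V × V // A o.1 o.2 ∨ o.1 = o.2} → Prop := fun v o => o.1.1 = v ∨ o.1.2 = v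
  have hnon : ∀ v, (Finset.univ.filter (Inc v)).Nonempty := fun v =>
    ⟨⟨(v, v), Or.inr rfl⟩, by simp [Inc]⟩
  have hlo : ∀ v, ∃ o, Inc v o ∧ ∀ o', Inc v o' → K o ≤ K o' := by
    intro v
    obtain ⟨o, ho, hmin⟩ := Finset.exists_min_image _ K (hnon v)
    simp only [Finset.mem_filter, Finset.mem_univ, true_and] at ho hmin
    exact ⟨o, ho, hmin⟩
  have hhi : ∀ v, ∃ o, Inc v o ∧ ∀ o', Inc v o' → K o' ≤ K o := by
    intro v
    obtain ⟨o, ho, hmax⟩ := Finset.exists_max_image _ K (hnon v)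
    simp only [Finset.mem_filter, Finset.mem_univ, true_and] at ho hmax
    exact ⟨o, ho, hmax⟩
  choose lo lo1 lo2 using hlo
  choose hi hi1 hi2 using hhi
  -- objects at their vertices
  have hinc : ∀ v o, Inc v o → InR pos o.1 (pos v).2 ∧ xAt pos o.1 (pos v).2 = (pos v).1 := by
    rintro v ⟨⟨a, b⟩, ho⟩ hv
    simp only at ho
    rcases ho with ho | ho
    · have hab := hup _ _ ho
      rcases hv with hv | hv
      · simp only at hv
        subst hv
        exact ⟨⟨le_rfl, hab.le⟩, xAt_left pos (a, b)⟩
      · simp only at hv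
        subst hv
        exact ⟨⟨hab.le, le_rfl⟩, xAt_right pos (a, b) hab⟩
    · subst ho
      have : a = v := by rcases hv with hv | hv <;> exact hv
      subst this
      exact ⟨⟨le_rfl, le_rfl⟩, xAt_left pos (a, a)⟩
  have hVV : ∀ v w, v ≠ w → (pos v).2 = (pos w).2 → K (hi v) < K (lo w) ∨ K (hi w) < K (lo v) := by
    intro v w hvw hy
    have hx : (pos v).1 ≠ (pos w).1 := fun h => hvw (hinj (Prod.ext h hy))
    have hv := hinc v (hi v) (hi1 v)
    have hw := hinc w (lo w) (lo1 w)
    have hv' := hinc v (lo v) (lo1 v)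
    have hw' := hinc w (hi w) (hi1 w)
    rw [← hy] at hw hw'
    rcases lt_or_gt_of_ne hx with h | h
    · left
      exact hKL _ _ ⟨(pos v).2, hv.1, hw.1, by rw [hv.2, hw.2]; exact h⟩
    · right
      exact hKL _ _ ⟨(pos v).2, hw'.1, hv'.1, by rw [hv'.2, hw'.2]; exact h⟩
  have hEV : ∀ (a b : V) (hab : A a b) (w : V), w ≠ a → w ≠ b → (pos a).2 ≤ (pos w).2 →
      (pos w).2 ≤ (pos b).2 → K ⟨(a, b), Or.inl hab⟩ < K (lo w) ∨
        K (hi w) < K ⟨(a, b), Or.inl hab⟩ := by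
    intro a b hab w hwa hwb y1 y2
    have hR : InR pos (a, b) (pos w).2 := ⟨y1, y2⟩
    have hx : xAt pos (a, b) (pos w).2 ≠ (pos w).1 := by
      intro h
      have hm := xAt_mem pos (a, b) (hup a b hab) hR
      rw [h] at hm
      apply hvert a b w (hadj a b hab) hwa hwb
      rw [hcurve]
      exact hm
    have hw := hinc w (lo w) (lo1 w)
    have hw' := hinc w (hi w) (hi1 w)
    rcases lt_or_gt_of_ne hx with h | h
    · left
      exact hKL _ _ ⟨(pos w).2, hR, hw.1, by rw [hw.2]; exact h⟩
    · right
      exact hKL _ _ ⟨(pos w).2, hw'.1, hR, by rw [hw'.2]; exact h⟩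
  have hnot : ∀ u v, A u v → ¬ A v u := by
    intro u v h1 h2
    have := hup _ _ h1
    have := hup _ _ h2
    linarith
  let Xs : V → V → ℝ := fun u v =>
    if h : A u v then (K ⟨(u, v), Or.inl h⟩ : ℝ) else
      if h : A v u then (K ⟨(v, u), Or.inl h⟩ : ℝ) else 0
  have Xs1 : ∀ u v (h : A u v), Xs u v = K ⟨(u, v), Or.inl h⟩ := by
    intro u v h
    simp only [Xs]; rw [dif_pos h]
  have Xs2 : ∀ u v (h : A v u), Xs u v = K ⟨(v, u), Or.inl h⟩ := by
    intro u v h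
    simp only [Xs]; rw [dif_neg (hnot v u h), dif_pos h]
  have Xsymm : ∀ u v, Xs v u = Xs u v := by
    intro u v
    by_cases h : A u v
    · rw [Xs1 u v h, Xs2 v u h]
    · by_cases h' : A v u
      · rw [Xs1 v u h', Xs2 u v h']
      · simp [Xs, h, h']
  have Xor : ∀ u v, G.Adj u v → ∃ (a b : V) (hab : A a b), Xs u v = K ⟨(a, b), Or.inl hab⟩ ∧
      ((a = u ∧ b = v) ∨ (a = v ∧ b = u)) := by
    intro u v h
    rcases (hAG u v).1 h with h | h
    · exact ⟨u, v, h, Xs1 u v h, Or.inl ⟨rfl, rfl⟩⟩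
    · exact ⟨v, u, h, Xs2 u v h, Or.inr ⟨rfl, rfl⟩⟩
  have lohi : ∀ v, K (lo v) ≤ K (hi v) := fun v => lo2 v _ (hi1 v)
  let DO : OrthDrawing G :=
    { box := fun v => ⟨K (lo v), K (hi v), (pos v).2, (pos v).2,
        by exact_mod_cast lohi v, le_rfl⟩
      chain := fun u v => [(Xs u v, (pos u).2), (Xs u v, (pos v).2)]
      chain_symm := fun u v => by simp [Xsymm u v] }
  have hOc : ∀ u v, DO.curve u v =
      segment ℝ ((Xs u v, (pos u).2) : Pt) (Xs u v, (pos v).2) := fun u v => chainSet_pair _ _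
  have hbox : ∀ v (P : Pt), P ∈ (DO.box v).pts ↔
      (((K (lo v) : ℝ) ≤ P.1 ∧ P.1 ≤ K (hi v)) ∧ ((pos v).2 ≤ P.2 ∧ P.2 ≤ (pos v).2)) :=
    fun v P => Iff.rfl
  have hends : ∀ u v, G.Adj u v → ((Xs u v, (pos u).2) : Pt) ∈ (DO.box u).pts ∧
      ((Xs u v, (pos v).2) : Pt) ∈ (DO.box v).pts := by
    intro u v h
    obtain ⟨a, b, hab, hX, hor⟩ := Xor u v h
    have i1 : Inc u ⟨(a, b), Or.inl hab⟩ := by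
      rcases hor with h | h
      · exact Or.inl h.1
      · exact Or.inr h.2
    have i2 : Inc v ⟨(a, b), Or.inl hab⟩ := by
      rcases hor with h | h
      · exact Or.inr h.2
      · exact Or.inl h.1
    rw [hbox, hbox, hX]
    refine ⟨⟨⟨?_, ?_⟩, le_rfl, le_rfl⟩, ⟨⟨?_, ?_⟩, le_rfl, le_rfl⟩⟩
    · exact Nat.cast_le.2 (lo2 u _ i1)
    · exact Nat.cast_le.2 (hi2 u _ i1)
    · exact Nat.cast_le.2 (lo2 v _ i2)
    · exact Nat.cast_le.2 (hi2 v _ i2)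
  have hyne : ∀ u v, G.Adj u v → (pos u).2 ≠ (pos v).2 := by
    intro u v h
    rcases (hAG u v).1 h with h | h
    · exact (hup _ _ h).ne
    · exact (hup _ _ h).ne'
  refine ⟨DO, ⟨?_, ?_, ?_, ?_, ?_⟩, fun _ _ _ => rfl, ?_, ?_⟩
  · intro u v huv
    rw [Set.disjoint_left]
    intro P h1 h2
    rw [hbox] at h1 h2
    have hy : (pos u).2 = (pos v).2 := by linarith [h1.2.1, h1.2.2, h2.2.1, h2.2.2]
    rcases hVV u v huv hy with h | h
    · have : (K (hi u) : ℝ) < K (lo v) := by exact_mod_cast h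
      linarith [h1.1.1, h1.1.2, h2.1.1, h2.1.2]
    · have : (K (hi v) : ℝ) < K (lo u) := by exact_mod_cast h
      linarith [h1.1.1, h1.1.2, h2.1.1, h2.1.2]
  · intro u v h
    refine ⟨simple_pair ?_, ?_, genuine_pair _ _⟩
    · intro h'
      exact hyne u v h (Prod.ext_iff.1 h').2
    · intro s hs
      simp [chainSegs, DO] at hs
      subst hs
      left; rfl
  · intro u v h
    exact ⟨_, _, [], rfl, (hends u v h).1, (hends u v h).2⟩
  · rintro u v w h P ⟨hP, hPw⟩
    rw [hOc] at hP
    obtain ⟨e1, e2⟩ := vseg hP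
    rw [hbox] at hPw
    have ey : P.2 = (pos w).2 := le_antisymm hPw.2.2 hPw.2.1
    by_cases hwu : w = u
    · left
      refine ⟨hwu, ?_⟩
      subst hwu
      change some ((Xs w v, (pos w).2) : Pt) = some P
      rw [← e1, ← ey]
    by_cases hwv : w = v
    · right
      refine ⟨hwv, ?_⟩
      subst hwv
      change some ((Xs u w, (pos w).2) : Pt) = some P
      rw [← e1, ← ey]
    exfalso
    obtain ⟨a, b, hab, hX, hor⟩ := Xor u v h
    have hba := hup a b hab
    rw [e1, hX] at hPw
    have r1 := hPw.1.1
    have r2 := hPw.1.2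
    have r1' : K (lo w) ≤ K ⟨(a, b), Or.inl hab⟩ := by exact_mod_cast r1
    have r2' : K ⟨(a, b), Or.inl hab⟩ ≤ K (hi w) := by exact_mod_cast r2
    rw [ey] at e2
    have : w ≠ a ∧ w ≠ b ∧ (pos a).2 ≤ (pos w).2 ∧ (pos w).2 ≤ (pos b).2 := by
      rcases hor with ⟨rfl, rfl⟩ | ⟨rfl, rfl⟩
      · rcases e2 with e2 | e2
        · exact ⟨hwu, hwv, e2.1, e2.2⟩
        · linarith
      · rcases e2 with e2 | e2
        · linarith
        · exact ⟨hwv, hwu, e2.1, e2.2⟩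
    rcases hEV a b hab w this.1 this.2.1 this.2.2.1 this.2.2.2 with h | h <;> omega
  · rintro u v x y h h' hne P ⟨hP, hP'⟩
    exfalso
    rw [hOc] at hP hP'
    have e1 := (vseg hP).1
    have e2 := (vseg hP').1
    obtain ⟨a, b, hab, hX, hor⟩ := Xor u v h
    obtain ⟨c, d, hcd, hX', hor'⟩ := Xor x y h'
    have : (K ⟨(a, b), Or.inl hab⟩ : ℝ) = K ⟨(c, d), Or.inl hcd⟩ := by
      rw [← hX, ← hX', ← e1, ← e2]
    have := hK (by exact_mod_cast this)
    have := congrArg Subtype.val this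
    simp only [Prod.mk.injEq] at this
    obtain ⟨rfl, rfl⟩ := this
    apply hne
    rw [Sym2.eq_iff]
    rcases hor with ⟨rfl, rfl⟩ | ⟨rfl, rfl⟩ <;> rcases hor' with ⟨rfl, rfl⟩ | ⟨rfl, rfl⟩ <;> simp
  · have hyint : ∀ v, ∃ b : ℤ, (pos v).2 = b := fun v => (hI (pos v) (Or.inl ⟨v, rfl⟩)).2
    have hKint : ∀ o, ∃ b : ℤ, (K o : ℝ) = b := fun o => ⟨(K o : ℤ), by push_cast; rfl⟩
    intro P hP
    rcases hP with hP | hP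
    · simp only [Set.mem_iUnion] at hP
      obtain ⟨v, hP⟩ := hP
      rcases hP with rfl | rfl | rfl | rfl
      · exact ⟨hKint _, hyint v⟩
      · exact ⟨hKint _, hyint v⟩
      · exact ⟨hKint _, hyint v⟩
      · exact ⟨hKint _, hyint v⟩
    · simp only [Set.mem_iUnion] at hP
      obtain ⟨u, v, h, hP⟩ := hP
      obtain ⟨a, b, hab, hX, -⟩ := Xor u v h
      have hXi : ∃ b : ℤ, Xs u v = b := by rw [hX]; exact hKint _
      change P ∈ [(Xs u v, (pos u).2), (Xs u v, (pos v).2)] at hP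
      simp only [List.mem_cons, List.not_mem_nil, or_false] at hP
      rcases hP with rfl | rfl
      · exact ⟨hXi, hyint u⟩
      · exact ⟨hXi, hyint v⟩
  · intro u v h
    exact ⟨_, _, rfl, rfl, hup u v h, (hends u v (hadj u v h)).1, (hends u v (hadj u v h)).2⟩

end Fwd

/-- Let `A` be a finite directed acyclic graph whose underlying
undirected graph `G` is simple and planar. Then `A` has an upward planar drawing
(a planar straight-line drawing of `G` in which the head of every directed edge is
strictly above its tail) if and only if `G` has a visibility representation in which
every edge is drawn as a vertical segment whose lower endpoint lies on the box of
the tail and whose upper endpoint lies on the box of the head. -/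
theorem upward_planar_iff_vertical_VR {V : Type} [Fintype V]
    (A : V → V → Prop) (G : SimpleGraph V)
    (hAG : ∀ u v, G.Adj u v ↔ (A u v ∨ A v u))
    (hacyclic : ∀ v, ¬ Relation.TransGen A v v)
    (hplanar : HasPlanarEmbedding G) :
    (∃ D : PolylineDrawing G, D.IsStraightLine ∧ D.IsPlanar ∧ D.IntCoords ∧
      ∀ u v, A u v → (D.pos u).2 < (D.pos v).2) ↔
    (∃ D : OrthDrawing G, D.IsPlanar ∧ D.IsVR ∧ D.IntCoords ∧
      ∀ u v, A u v → ∃ p q : Pt, D.chain u v = [p, q] ∧ p.1 = q.1 ∧ p.2 < q.2 ∧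
        p ∈ (D.box u).pts ∧ q ∈ (D.box v).pts) := by
  constructor
  · rintro ⟨D, hS, hD, hI, hup⟩
    exact fwd_dir A G hAG D hS hD hI hup
  · rintro ⟨D, hD, -, -, hA⟩
    exact back_dir A G hAG D hD hA
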